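/- For every n ≥ 2 there exists δ = δ(n) > 0 with the following property: if K ⊂ ℝⁿ is an origin-symmetric convex body for which there exists T ∈ GL(n,ℝ) with B∞ⁿ ⊆ T(K) ⊆ (1+δ)·B∞ⁿ, then volₙ(K)·volₙ(K*) ≥ 𝒫(B∞ⁿ) = 4ⁿ/n!. -/

import Mathlib

open MeasureTheory RealInnerProductSpace ENNReal Pointwise

noncomputable section

/-- The unit cube `B∞ⁿ = {x : |xᵢ| ≤ 1 ∀ i}`. -/
def cube (n : ℕ) : Set (EuclideanSpace ℝ (Fin n)) := {x | ∀ i, |x i| ≤ 1}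

/-- The polar body `K* = {ξ : ⟨x, ξ⟩ ≤ 1 ∀ x ∈ K}`. -/
def polarBody {n : ℕ} (K : Set (EuclideanSpace ℝ (Fin n))) :
    Set (EuclideanSpace ℝ (Fin n)) :=
  {ξ | ∀ x ∈ K, ⟪x, ξ⟫ ≤ 1}


lemma prod_one_add_bound {ι : Type*} [DecidableEq ι] (s : Finset ι) :
    ∃ C : ℝ, 0 ≤ C ∧ ∀ (a : ι → ℝ) (η : ℝ), 0 ≤ η → η ≤ 1 → (∀ i, |a i| ≤ η) →
      |∏ i ∈ s, (1 + a i) - 1 - ∑ i ∈ s, a i| ≤ C * η ^ 2 := by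
  induction s using Finset.induction_on with
  | empty => exact ⟨0, le_rfl, by intro a η _ _ _; simp⟩
  | insert j s hj ih =>
    obtain ⟨C, hC, h⟩ := ih
    refine ⟨C + (C + s.card), by positivity, ?_⟩
    intro a η h0 h1 ha
    rw [Finset.prod_insert hj, Finset.sum_insert hj]
    have e : (1 + a j) * ∏ i ∈ s, (1 + a i) - 1 - (a j + ∑ i ∈ s, a i)
        = (∏ i ∈ s, (1 + a i) - 1 - ∑ i ∈ s, a i)
          + a j * ((∏ i ∈ s, (1 + a i) - 1 - ∑ i ∈ s, a i) + ∑ i ∈ s, a i) := by ring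
    rw [e]
    have h2 := h a η h0 h1 ha
    have h3 : |∑ i ∈ s, a i| ≤ s.card * η := by
      refine (Finset.abs_sum_le_sum_abs _ _).trans ?_
      refine (Finset.sum_le_card_nsmul s _ η (fun i _ => ha i)).trans ?_
      simp
    refine (abs_add_le _ _).trans ?_
    rw [abs_mul]
    have h4 : |(∏ i ∈ s, (1 + a i) - 1 - ∑ i ∈ s, a i) + ∑ i ∈ s, a i|
        ≤ (C + s.card) * η := by
      refine (abs_add_le _ _).trans ?_
      have : C * η ^ 2 ≤ C * η := mul_le_mul_of_nonneg_left (by nlinarith) hC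
      linarith
    have h5 := mul_le_mul (ha j) h4 (abs_nonneg _) h0
    nlinarith

lemma det_one_add_bound (n : ℕ) :
    ∃ C : ℝ, 0 ≤ C ∧ ∀ (M : Matrix (Fin n) (Fin n) ℝ) (η : ℝ), 0 ≤ η → η ≤ 1 →
      (∀ i j, |M i j| ≤ η) → 1 + M.trace - C * η ^ 2 ≤ (1 + M).det := by
  obtain ⟨C, hC, h⟩ := prod_one_add_bound (Finset.univ : Finset (Fin n))
  refine ⟨C + (Finset.univ.erase (1 : Equiv.Perm (Fin n))).card * 2 ^ n, by positivity, ?_⟩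
  intro M η h0 h1 hM
  rw [Matrix.det_apply', ← Finset.add_sum_erase _ _ (Finset.mem_univ (1 : Equiv.Perm (Fin n)))]
  have hid := h (fun i => M i i) η h0 h1 (fun i => hM i i)
  have h6 : |∑ σ ∈ Finset.univ.erase (1 : Equiv.Perm (Fin n)),
      ((Equiv.Perm.sign σ : ℤ) : ℝ) * ∏ i, (1 + M) (σ i) i|
      ≤ (Finset.univ.erase (1 : Equiv.Perm (Fin n))).card * (2 ^ n * η ^ 2) := by
    refine (Finset.abs_sum_le_sum_abs _ _).trans ?_
    refine (Finset.sum_le_card_nsmul _ _ (2 ^ n * η ^ 2) ?_).trans (by simp)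
    intro σ hσ
    have hσ1 : σ ≠ 1 := Finset.ne_of_mem_erase hσ
    rw [abs_mul]
    have hs : |((Equiv.Perm.sign σ : ℤ) : ℝ)| = 1 := by
      rcases Int.units_eq_one_or (Equiv.Perm.sign σ) with h | h <;> simp [h]
    rw [hs, one_mul]
    obtain ⟨i, hi⟩ : ∃ i, σ i ≠ i := by
      by_contra hcon
      push Not at hcon
      exact hσ1 (Equiv.ext hcon)
    have hi2 : σ (σ i) ≠ σ i := fun hh => hi (σ.injective hh)
    rw [Finset.abs_prod]
    have hb : ∀ k, |(1 + M) (σ k) k| ≤ 2 := by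
      intro k
      rw [Matrix.add_apply]
      refine (abs_add_le _ _).trans ?_
      have := hM (σ k) k
      have h1' : |(1 : Matrix (Fin n) (Fin n) ℝ) (σ k) k| ≤ 1 := by
        rw [Matrix.one_apply]; split_ifs <;> simp
      linarith
    have hoff : ∀ k, σ k ≠ k → |(1 + M) (σ k) k| ≤ η := by
      intro k hk
      rw [Matrix.add_apply, Matrix.one_apply_ne hk, zero_add]
      exact hM _ _
    rw [← Finset.mul_prod_erase _ _ (Finset.mem_univ i),
      ← Finset.mul_prod_erase _ _ (Finset.mem_erase.2 ⟨hi, Finset.mem_univ (σ i)⟩)]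
    have hrest : ∏ k ∈ (Finset.univ.erase i).erase (σ i), |(1 + M) (σ k) k| ≤ 2 ^ n := by
      refine (Finset.prod_le_prod (fun _ _ => abs_nonneg _) (fun k _ => hb k)).trans ?_
      rw [Finset.prod_const]
      refine pow_le_pow_right₀ (by norm_num) ?_
      refine (Finset.card_le_univ _).trans (by simp)
    have hr0 : 0 ≤ ∏ k ∈ (Finset.univ.erase i).erase (σ i), |(1 + M) (σ k) k| :=
      Finset.prod_nonneg (fun _ _ => abs_nonneg _)
    have ha := hoff i hi
    have hb' := hoff (σ i) hi2
    calc _ ≤ η * (η * 2 ^ n) := by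
          apply mul_le_mul ha _ (by positivity) h0
          exact mul_le_mul hb' hrest hr0 h0
      _ = 2 ^ n * η ^ 2 := by ring
  have e1 : ((Equiv.Perm.sign (1 : Equiv.Perm (Fin n)) : ℤ) : ℝ)
      * ∏ i, (1 + M) ((1 : Equiv.Perm (Fin n)) i) i = ∏ i, (1 + M i i) := by simp
  rw [e1]
  have ht : M.trace = ∑ i, M i i := rfl
  rw [ht]
  have := abs_le.1 hid
  have h7 := abs_le.1 h6
  nlinarith

lemma ofReal_integral_le_aux {α : Type*} [MeasurableSpace α] {μ : Measure α} {g : α → ℝ}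
    (hg : Integrable g μ) : ENNReal.ofReal (∫ x, g x ∂μ) ≤ ∫⁻ x, ENNReal.ofReal (g x) ∂μ := by
  have h1 : ∫ x, g x ∂μ ≤ ∫ x, max (g x) 0 ∂μ :=
    integral_mono hg hg.pos_part (fun x => le_max_left _ _)
  refine (ENNReal.ofReal_le_ofReal h1).trans ?_
  rw [ofReal_integral_eq_lintegral_ofReal hg.pos_part
    (Filter.Eventually.of_forall fun x => le_max_right _ _)]
  refine lintegral_mono fun x => ?_
  rcases le_total (g x) 0 with h | h
  · simp [h]
  · simp [h]

lemma fderiv_lip_bound {n : ℕ} {f : (Fin n → ℝ) → ℝ} (hf : LipschitzWith 2 f)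
    (x u : Fin n → ℝ) : |fderiv ℝ f x u| ≤ 2 * ‖u‖ := by
  have h1 : ‖fderiv ℝ f x‖ ≤ 2 := by
    simpa using norm_fderiv_le_of_lipschitz ℝ hf (x₀ := x)
  rw [← Real.norm_eq_abs]
  refine ((fderiv ℝ f x).le_opNorm u).trans ?_
  gcongr

lemma integrable_fderiv_lip {n : ℕ} {f : (Fin n → ℝ) → ℝ} (hf : LipschitzWith 2 f)
    {B : Set (Fin n → ℝ)} (hfin : volume B ≠ ⊤) (u : Fin n → ℝ) :
    IntegrableOn (fun x => fderiv ℝ f x u) B := by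
  have : IsFiniteMeasure (volume.restrict B) := ⟨by simpa using hfin.lt_top⟩
  refine Integrable.of_bound (C := 2 * ‖u‖) ?_ ?_
  · exact (measurable_fderiv_apply_const ℝ f u).aestronglyMeasurable
  · exact Filter.Eventually.of_forall fun x => fderiv_lip_bound hf x u

lemma clm_apply_eq_sum {n : ℕ} (ψ : (Fin n → ℝ) →L[ℝ] ℝ) (u : Fin n → ℝ) :
    ψ u = ∑ i, u i * ψ (Pi.single i 1) := by
  conv_lhs => rw [← Finset.univ_sum_single u]
  rw [map_sum]
  refine Finset.sum_congr rfl fun i _ => ?_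
  have : (Pi.single i (u i) : Fin n → ℝ) = u i • Pi.single i 1 := by
    rw [← Pi.single_smul]; simp
  rw [this, map_smul, smul_eq_mul]

lemma vol_lower {n : ℕ} {J : Type*} [Fintype J] (f : J → (Fin n → ℝ) → ℝ)
    (hf : ∀ j, LipschitzWith 2 (f j)) (B : Set (Fin n → ℝ)) (hB : MeasurableSet B)
    (hfin : volume B ≠ ⊤) :
    ∃ C ρ0 : ℝ, 0 ≤ C ∧ 0 < ρ0 ∧ ∀ (u : J → Fin n → ℝ) (ρ : ℝ), 0 ≤ ρ → ρ ≤ ρ0 →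
      (∀ j, ‖u j‖ ≤ ρ) →
      ENNReal.ofReal (volume.real B + (∑ j, ∫ x in B, fderiv ℝ (f j) x (u j)) - C * ρ ^ 2)
        ≤ volume ((fun x => x + ∑ j, f j x • u j) '' B) := by
  classical
  obtain ⟨C, hC, hdet⟩ := det_one_add_bound n
  set N : ℝ := (Fintype.card J : ℝ) with hN
  have hN0 : 0 ≤ N := by positivity
  refine ⟨volume.real B * (C * (2 * N) ^ 2), 1 / (2 * N + 2), by positivity, by positivity, ?_⟩
  intro u ρ hρ0 hρ hu
  have hη : 2 * N * ρ < 1 := by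
    have : ρ * (2 * N + 2) ≤ 1 := by
      rwa [le_div_iff₀ (by positivity)] at hρ
    rcases hρ0.eq_or_lt with h | h
    · rw [← h]; simp
    · nlinarith
  set Φ : (Fin n → ℝ) → (Fin n → ℝ) := fun x => x + ∑ j, f j x • u j with hΦ
  set Φ' : (Fin n → ℝ) → (Fin n → ℝ) →L[ℝ] (Fin n → ℝ) := fun x =>
    ContinuousLinearMap.id ℝ _ + ∑ j, (fderiv ℝ (f j) x).smulRight (u j) with hΦ'
  set D : Set (Fin n → ℝ) := {x | ∀ j, DifferentiableAt ℝ (f j) x} with hD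
  have hDm : MeasurableSet D := by
    rw [hD, Set.ofPred_forall]
    exact MeasurableSet.iInter fun j => measurableSet_of_differentiableAt ℝ (f j)
  have hDae : ∀ᵐ x ∂(volume : Measure (Fin n → ℝ)), x ∈ D := by
    rw [hD]
    simp only [Set.mem_ofPred_eq]
    rw [ae_all_iff]
    exact fun j => (hf j).ae_differentiableAt
  have hder : ∀ x ∈ B ∩ D, HasFDerivWithinAt Φ (Φ' x) (B ∩ D) x := by
    intro x hx
    apply HasFDerivAt.hasFDerivWithinAt
    apply (hasFDerivAt_id x).add
    have := HasFDerivAt.fun_sum (u := Finset.univ) (A := fun j x => f j x • u j)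
      (A' := fun j => (fderiv ℝ (f j) x).smulRight (u j)) (x := x)
      (fun j _ => ((hx.2 j).hasFDerivAt).smul_const (u j))
    exact this
  have hinj : Set.InjOn Φ (B ∩ D) := by
    intro x _ y _ hxy
    have h1 : x - y = ∑ j, (f j y - f j x) • u j := by
      have h2 : x + ∑ j, f j x • u j = y + ∑ j, f j y • u j := hxy
      simp only [sub_smul, Finset.sum_sub_distrib]
      rw [sub_eq_sub_iff_add_eq_add, h2, add_comm]
    have h3 : ‖x - y‖ ≤ 2 * N * ρ * ‖x - y‖ := by
      conv_lhs => rw [h1]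
      refine (norm_sum_le _ _).trans ?_
      refine (Finset.sum_le_card_nsmul _ _ (2 * ‖x - y‖ * ρ) ?_).trans (le_of_eq ?_)
      · intro j _
        rw [norm_smul]
        have h4 := (hf j).dist_le_mul y x
        rw [dist_eq_norm, dist_eq_norm, norm_sub_rev y x] at h4
        exact mul_le_mul h4 (hu j) (norm_nonneg _) (by positivity)
      · rw [nsmul_eq_mul, Finset.card_univ]; ring
    have h5 : ‖x - y‖ = 0 := by
      have := norm_nonneg (x - y)
      nlinarith
    exact sub_eq_zero.1 (norm_eq_zero.1 h5)
  have hchange := lintegral_abs_det_fderiv_eq_addHaar_image volume (hB.inter hDm) hder hinj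
  refine le_trans ?_ (measure_mono (Set.image_mono (Set.inter_subset_left : B ∩ D ⊆ B)))
  rw [← hchange]
  have hae : (B ∩ D : Set (Fin n → ℝ)) =ᵐ[volume] B := by
    filter_upwards [hDae] with x hx
    exact propext ⟨fun h => h.1, fun h => ⟨h, hx⟩⟩
  rw [setLIntegral_congr hae]
  have hpt : ∀ x, 1 + ∑ j, fderiv ℝ (f j) x (u j) - C * (2 * N * ρ) ^ 2 ≤ |(Φ' x).det| := by
    intro x
    set M : Matrix (Fin n) (Fin n) ℝ := Matrix.of fun a b =>
      ∑ j, fderiv ℝ (f j) x (Pi.single b 1) * u j a with hM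
    have hdM : (Φ' x).det = (1 + M).det := by
      rw [ContinuousLinearMap.det, ← LinearMap.det_toMatrix']
      congr 1
      ext a b
      simp [LinearMap.toMatrix'_apply, hΦ', hM, Matrix.one_apply, Pi.single_apply]
    have htr : M.trace = ∑ j, fderiv ℝ (f j) x (u j) := by
      simp only [Matrix.trace, Matrix.diag_apply, hM, Matrix.of_apply]
      rw [Finset.sum_comm]
      refine Finset.sum_congr rfl fun j _ => ?_
      rw [clm_apply_eq_sum]
      exact Finset.sum_congr rfl fun i _ => mul_comm _ _
    have hMb : ∀ a b, |M a b| ≤ 2 * N * ρ := by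
      intro a b
      simp only [hM, Matrix.of_apply]
      refine (Finset.abs_sum_le_sum_abs _ _).trans ?_
      refine (Finset.sum_le_card_nsmul _ _ (2 * ρ) ?_).trans (le_of_eq ?_)
      · intro j _
        rw [abs_mul]
        have h1 := fderiv_lip_bound (hf j) x (Pi.single b 1)
        have h2 : ‖(Pi.single b 1 : Fin n → ℝ)‖ = 1 := by rw [Pi.norm_single]; simp
        rw [h2, mul_one] at h1
        have h3 : |u j a| ≤ ρ := (norm_le_pi_norm (u j) a).trans (hu j)
        exact mul_le_mul h1 h3 (abs_nonneg _) (by norm_num)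
      · rw [nsmul_eq_mul, Finset.card_univ]; ring
    have := hdet M (2 * N * ρ) (by positivity) hη.le hMb
    rw [← hdM, htr] at this
    exact this.trans (le_abs_self _)
  have : IsFiniteMeasure (volume.restrict B) := ⟨by simpa using hfin.lt_top⟩
  have hIntg : ∀ j, Integrable (fun x => fderiv ℝ (f j) x (u j)) (volume.restrict B) :=
    fun j => integrable_fderiv_lip (hf j) hfin (u j)
  have hint3 : Integrable (fun x => 1 + ∑ j, fderiv ℝ (f j) x (u j)) (volume.restrict B) :=
    (integrable_const _).add (integrable_finsetSum _ fun j _ => hIntg j)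
  have hint2 : Integrable (fun x => 1 + ∑ j, fderiv ℝ (f j) x (u j) - C * (2 * N * ρ) ^ 2)
      (volume.restrict B) :=
    hint3.sub (integrable_const _)
  have heq : volume.real B + (∑ j, ∫ x in B, fderiv ℝ (f j) x (u j))
      - volume.real B * (C * (2 * N) ^ 2) * ρ ^ 2
      = ∫ x in B, (1 + ∑ j, fderiv ℝ (f j) x (u j) - C * (2 * N * ρ) ^ 2) := by
    rw [integral_sub hint3 (integrable_const _), integral_add (integrable_const _)
      (integrable_finsetSum _ fun j _ => hIntg j), integral_finsetSum _ (fun j _ => hIntg j)]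
    simp
    ring
  rw [heq]
  refine (ofReal_integral_le_aux hint2).trans (lintegral_mono fun x => ?_)
  exact ENNReal.ofReal_le_ofReal (hpt x)

/-- sign pattern of `x` at level `s` -/
def pat {n : ℕ} (x : Fin n → ℝ) (s : ℝ) : Fin n → SignType :=
  fun i => if s < |x i| then SignType.sign (x i) else 0

/-- the length of the set of levels at which the pattern of `x` is `p` -/
def mm {n : ℕ} (p : Fin n → SignType) (x : Fin n → ℝ) : ℝ :=
  volume.real {s : ℝ | 0 ≤ s ∧ pat x s = p}

/-- real vector of a pattern -/
def vv {n : ℕ} (p : Fin n → SignType) : Fin n → ℝ := fun i => (p i : ℝ)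

def sp {n : ℕ} (p : Fin n → SignType) : Finset (Fin n) := Finset.univ.filter fun i => p i ≠ 0

lemma sp_nonempty {n : ℕ} {p : Fin n → SignType} (hp : p ≠ 0) : (sp p).Nonempty := by
  obtain ⟨i, hi⟩ := Function.ne_iff.1 hp
  exact ⟨i, by simpa [sp] using hi⟩

def aa {n : ℕ} (p : Fin n → SignType) (hp : p ≠ 0) (x : Fin n → ℝ) : ℝ :=
  (sp p).inf' (sp_nonempty hp) (fun i => (p i : ℝ) * x i)

def bb {n : ℕ} (p : Fin n → SignType) (x : Fin n → ℝ) : ℝ :=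
  ‖(fun i => if p i = 0 then x i else 0 : Fin n → ℝ)‖

lemma sign_mul_self' (a : SignType) (ha : a ≠ 0) : (a : ℝ) * (a : ℝ) = 1 := by
  cases a <;> simp_all

lemma abs_sign_le (a : SignType) : |(a : ℝ)| ≤ 1 := by
  cases a <;> simp

lemma pat_eq_iff {n : ℕ} (x : Fin n → ℝ) (s : ℝ) (hs : 0 ≤ s) (p : Fin n → SignType) :
    pat x s = p ↔ ∀ i, (p i ≠ 0 → s < (p i : ℝ) * x i) ∧ (p i = 0 → |x i| ≤ s) := by
  rw [funext_iff]
  refine forall_congr' fun i => ?_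
  simp only [pat]
  rcases lt_trichotomy (x i) 0 with h | h | h
  · rw [sign_neg h, abs_of_neg h]
    generalize p i = a
    by_cases h2 : s < - x i
    · rw [if_pos h2]
      cases a <;> simp <;> linarith
    · rw [if_neg h2]
      cases a <;> simp <;> linarith
  · rw [h]
    generalize p i = a
    cases a <;> simp <;> linarith
  · rw [sign_pos h, abs_of_pos h]
    generalize p i = a
    by_cases h2 : s < x i
    · rw [if_pos h2]
      cases a <;> simp <;> linarith
    · rw [if_neg h2]
      cases a <;> simp <;> linarith

lemma bb_nonneg {n : ℕ} (p : Fin n → SignType) (x : Fin n → ℝ) : 0 ≤ bb p x := norm_nonneg _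

lemma lt_aa_iff {n : ℕ} {p : Fin n → SignType} (hp : p ≠ 0) (x : Fin n → ℝ) (s : ℝ) :
    s < aa p hp x ↔ ∀ i, p i ≠ 0 → s < (p i : ℝ) * x i := by
  rw [aa, Finset.lt_inf'_iff]
  simp [sp]

lemma le_aa_iff {n : ℕ} {p : Fin n → SignType} (hp : p ≠ 0) (x : Fin n → ℝ) (s : ℝ) :
    s ≤ aa p hp x ↔ ∀ i, p i ≠ 0 → s ≤ (p i : ℝ) * x i := by
  rw [aa, Finset.le_inf'_iff]
  simp [sp]

lemma bb_le_iff {n : ℕ} (p : Fin n → SignType) (x : Fin n → ℝ) (s : ℝ) (hs : 0 ≤ s) :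
    bb p x ≤ s ↔ ∀ i, p i = 0 → |x i| ≤ s := by
  rw [bb, pi_norm_le_iff_of_nonneg hs]
  refine forall_congr' fun i => ?_
  by_cases h : p i = 0 <;> simp [h, hs]

lemma pat_set {n : ℕ} {p : Fin n → SignType} (hp : p ≠ 0) (x : Fin n → ℝ) :
    {s : ℝ | 0 ≤ s ∧ pat x s = p} = Set.Ico (bb p x) (aa p hp x) := by
  ext s
  simp only [Set.mem_ofPred_eq, Set.mem_Ico]
  constructor
  · rintro ⟨h0, h⟩
    rw [pat_eq_iff x s h0] at h
    exact ⟨(bb_le_iff p x s h0).2 fun i => (h i).2, (lt_aa_iff hp x s).2 fun i => (h i).1⟩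
  · rintro ⟨h1, h2⟩
    have h0 : 0 ≤ s := (bb_nonneg p x).trans h1
    refine ⟨h0, (pat_eq_iff x s h0 p).2 fun i => ⟨?_, ?_⟩⟩
    · exact (lt_aa_iff hp x s).1 h2 i
    · exact (bb_le_iff p x s h0).1 h1 i

lemma mm_eq {n : ℕ} {p : Fin n → SignType} (hp : p ≠ 0) (x : Fin n → ℝ) :
    mm p x = max (aa p hp x - bb p x) 0 := by
  rw [mm, pat_set hp, Real.volume_real_Ico]

lemma mm_zero {n : ℕ} (x : Fin n → ℝ) : mm (0 : Fin n → SignType) x = 0 := by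
  rw [mm, measureReal_def]
  have : volume {s : ℝ | 0 ≤ s ∧ pat x s = 0} = ⊤ := by
    rw [eq_top_iff, ← Real.volume_Ici (a := ‖x‖)]
    apply measure_mono
    intro s hs
    have h0 : 0 ≤ s := (norm_nonneg x).trans hs
    refine ⟨h0, (pat_eq_iff x s h0 0).2 fun i => ⟨by simp, fun _ => (norm_le_pi_norm x i).trans hs⟩⟩
  rw [this]; rfl

lemma mm_nonneg {n : ℕ} (p : Fin n → SignType) (x : Fin n → ℝ) : 0 ≤ mm p x :=
  measureReal_nonneg

lemma mm_pos_iff {n : ℕ} {p : Fin n → SignType} (hp : p ≠ 0) (x : Fin n → ℝ) :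
    0 < mm p x ↔ ∃ s, 0 ≤ s ∧ pat x s = p := by
  have h : (∃ s, 0 ≤ s ∧ pat x s = p) ↔ (Set.Ico (bb p x) (aa p hp x)).Nonempty := by
    rw [← pat_set hp]; rfl
  rw [h, Set.nonempty_Ico, mm_eq hp]
  simp

lemma aa_lip {n : ℕ} {p : Fin n → SignType} (hp : p ≠ 0) (x y : Fin n → ℝ) :
    aa p hp x ≤ aa p hp y + ‖x - y‖ := by
  rw [← sub_le_iff_le_add, le_aa_iff]
  intro i hi
  have h1 := (le_aa_iff hp x _).1 le_rfl i hi
  have h2 : |x i - y i| ≤ ‖x - y‖ := norm_le_pi_norm (x - y) i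
  have h3 : |(p i : ℝ) * (x i - y i)| ≤ ‖x - y‖ := by
    rw [abs_mul]
    have := abs_sign_le (p i)
    nlinarith [abs_nonneg (x i - y i)]
  have := (abs_le.1 h3).2
  nlinarith

lemma bb_lip {n : ℕ} (p : Fin n → SignType) (x y : Fin n → ℝ) :
    bb p x ≤ bb p y + ‖x - y‖ := by
  rw [bb_le_iff _ _ _ (add_nonneg (bb_nonneg _ _) (norm_nonneg _))]
  intro i hi
  have h1 := (bb_le_iff p y _ (bb_nonneg p y)).1 le_rfl i hi
  have h2 : |x i - y i| ≤ ‖x - y‖ := norm_le_pi_norm (x - y) i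
  have h3 : |x i| ≤ |y i| + |x i - y i| := by
    have := abs_add_le (y i) (x i - y i)
    simpa using this
  linarith

lemma mm_lip {n : ℕ} (p : Fin n → SignType) : LipschitzWith 2 (mm p) := by
  by_cases hp : p = 0
  · subst hp
    have : (mm (0 : Fin n → SignType)) = fun _ => 0 := funext mm_zero
    rw [this]
    exact LipschitzWith.const' 0
  · apply LipschitzWith.of_le_add_mul
    intro x y
    rw [mm_eq hp, mm_eq hp, dist_eq_norm]
    have h1 := aa_lip hp x y
    have h2 := bb_lip p y x
    rw [norm_sub_rev] at h2
    have h3 := le_max_left (aa p hp y - bb p y) 0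
    have h4 := le_max_right (aa p hp y - bb p y) 0
    have h5 := norm_nonneg (x - y)
    simp only [NNReal.coe_ofNat]
    apply max_le <;> linarith

lemma sum_mm {n : ℕ} (w : (Fin n → SignType) → ℝ) (w0 : w 0 = 0) (x : Fin n → ℝ) (c k : ℝ)
    (hc : 0 ≤ c) (h : ∀ s, 0 ≤ s → w (pat x s) = if s < c then k else 0) :
    ∑ p, w p * mm p x = k * c := by
  classical
  have hmeas : ∀ p : Fin n → SignType, p ≠ 0 → MeasurableSet {s : ℝ | 0 ≤ s ∧ pat x s = p} := by
    intro p hp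
    rw [pat_set hp]; exact measurableSet_Ico
  have h1 : ∀ p : Fin n → SignType,
      ∫ s, ({s : ℝ | 0 ≤ s ∧ pat x s = p}).indicator (fun _ => w p) s = w p * mm p x := by
    intro p
    by_cases hp : p = 0
    · subst hp; simp [w0]
    · rw [integral_indicator_const _ (hmeas p hp), smul_eq_mul, mul_comm]; rfl
  have h2 : ∀ p ∈ (Finset.univ : Finset (Fin n → SignType)),
      Integrable (({s : ℝ | 0 ≤ s ∧ pat x s = p}).indicator (fun _ => w p)) := by
    intro p _
    by_cases hp : p = 0
    · subst hp; simp [w0]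
    · rw [integrable_indicator_iff (hmeas p hp), pat_set hp]
      simp
  have h3 : ∀ s : ℝ, ∑ p, ({s : ℝ | 0 ≤ s ∧ pat x s = p}).indicator (fun _ => w p) s
      = (Set.Ico 0 c).indicator (fun _ => k) s := by
    intro s
    by_cases hs : 0 ≤ s
    · rw [Finset.sum_eq_single (pat x s)]
      · rw [Set.indicator_of_mem (by exact ⟨hs, rfl⟩), h s hs]
        by_cases hsc : s < c
        · rw [if_pos hsc, Set.indicator_of_mem (show s ∈ Set.Ico 0 c from ⟨hs, hsc⟩)]
        · rw [if_neg hsc, Set.indicator_of_notMem (fun hh => hsc hh.2)]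
      · intro p _ hp
        exact Set.indicator_of_notMem (fun hh => hp hh.2.symm) _
      · simp
    · rw [Set.indicator_of_notMem (fun hh => hs hh.1)]
      exact Finset.sum_eq_zero fun p _ => Set.indicator_of_notMem (fun hh => hs hh.1) _
  calc ∑ p, w p * mm p x
      = ∑ p, ∫ s, ({s : ℝ | 0 ≤ s ∧ pat x s = p}).indicator (fun _ => w p) s :=
        Finset.sum_congr rfl fun p _ => (h1 p).symm
    _ = ∫ s, ∑ p, ({s : ℝ | 0 ≤ s ∧ pat x s = p}).indicator (fun _ => w p) s :=
        (integral_finsetSum _ h2).symm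
    _ = ∫ s, (Set.Ico 0 c).indicator (fun _ => k) s := by simp_rw [h3]
    _ = k * c := by
        rw [integral_indicator_const _ measurableSet_Ico, Real.volume_real_Ico]
        simp [hc, mul_comm]

lemma sum_mm_vec {n : ℕ} (x : Fin n → ℝ) (i : Fin n) : ∑ p, vv p i * mm p x = x i := by
  rw [sum_mm (fun p => vv p i) (by simp [vv]) x |x i| (SignType.sign (x i) : ℝ) (abs_nonneg _)]
  · exact sign_mul_abs (x i)
  · intro s hs
    simp only [vv, pat]
    split_ifs <;> simp

lemma sum_mm_smul {n : ℕ} (x : Fin n → ℝ) : ∑ p, mm p x • vv p = x := by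
  ext i
  rw [Finset.sum_apply]
  conv_rhs => rw [← sum_mm_vec x i]
  exact Finset.sum_congr rfl fun p _ => by simp [mul_comm]

lemma sum_mm_abs {n : ℕ} (x : Fin n → ℝ) (i : Fin n) : ∑ p, |vv p i| * mm p x = |x i| := by
  rw [sum_mm (fun p => |vv p i|) (by simp [vv]) x |x i| 1 (abs_nonneg _), one_mul]
  intro s hs
  simp only [vv, pat]
  split_ifs with h
  · rcases lt_trichotomy (x i) 0 with h' | h' | h'
    · simp [sign_neg h']
    · rw [h'] at h; simp at h; linarith
    · simp [sign_pos h']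
  · simp

lemma sum_mm_card {n : ℕ} (x : Fin n → ℝ) :
    ∑ p, ((sp p).card : ℝ) * mm p x = ∑ i, |x i| := by
  simp_rw [← sum_mm_abs x]
  rw [Finset.sum_comm]
  refine Finset.sum_congr rfl fun p _ => ?_
  rw [← Finset.sum_mul]
  congr 1
  rw [sp, Finset.card_filter]
  push_cast
  refine Finset.sum_congr rfl fun i _ => ?_
  simp only [vv]
  generalize p i = a
  cases a <;> simp

lemma sum_mm_norm {n : ℕ} (x : Fin n → ℝ) : ∑ p, mm p x = ‖x‖ := by
  classical
  have h := sum_mm (fun p : Fin n → SignType => if p = 0 then (0 : ℝ) else 1) (by simp) x ‖x‖ 1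
    (norm_nonneg _) (by
      intro s hs
      have : pat x s = 0 ↔ ‖x‖ ≤ s := by
        rw [pat_eq_iff x s hs, pi_norm_le_iff_of_nonneg hs]
        simp
      by_cases h2 : s < ‖x‖
      · simp [this, h2]
      · simp [this, h2, not_lt.1 h2])
  rw [one_mul] at h
  rw [← h]
  refine Finset.sum_congr rfl fun p _ => ?_
  by_cases hp : p = 0
  · subst hp; simp [mm_zero]
  · simp [hp]

/-- `p` is a subpattern of `q` -/
def SubPat {n : ℕ} (p q : Fin n → SignType) : Prop := ∀ i, p i ≠ 0 → q i = p i

lemma norm_vv_le {n : ℕ} (p : Fin n → SignType) : ‖vv p‖ ≤ 1 := by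
  rw [pi_norm_le_iff_of_nonneg zero_le_one]
  exact fun i => abs_sign_le (p i)

lemma mm_mono_right {n : ℕ} {p q : Fin n → SignType} (h : SubPat p q) (x : Fin n → ℝ) (t : ℝ)
    (ht : 0 ≤ t) : mm p x ≤ mm p (x + t • vv q) := by
  by_cases hp : p = 0
  · subst hp; rw [mm_zero, mm_zero]
  rw [mm_eq hp, mm_eq hp]
  have h1 : aa p hp x + t ≤ aa p hp (x + t • vv q) := by
    rw [le_aa_iff]
    intro i hi
    have h2 := (le_aa_iff hp x _).1 le_rfl i hi
    have h3 := sign_mul_self' (p i) hi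
    simp only [Pi.add_apply, Pi.smul_apply, smul_eq_mul, vv, h i hi]
    nlinarith
  have h2 := bb_lip p (x + t • vv q) x
  have h3 : ‖x + t • vv q - x‖ ≤ t := by
    rw [add_sub_cancel_left, norm_smul, Real.norm_of_nonneg ht]
    nlinarith [norm_vv_le q]
  exact max_le_max (by linarith) le_rfl

lemma bb_shift {n : ℕ} {p q : Fin n → SignType} (h : SubPat p q) (x : Fin n → ℝ) (t : ℝ) :
    bb q (x + t • vv p) = bb q x := by
  unfold bb
  congr 1
  ext i
  split_ifs with hq
  · have : p i = 0 := by
      by_contra hp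
      exact hp ((h i hp).symm.trans hq)
    simp [vv, this]
  · rfl

lemma mm_mono_left {n : ℕ} {p q : Fin n → SignType} (h : SubPat p q) (x : Fin n → ℝ) (t : ℝ)
    (ht : 0 ≤ t) : mm q x ≤ mm q (x + t • vv p) := by
  by_cases hq : q = 0
  · subst hq; rw [mm_zero, mm_zero]
  rw [mm_eq hq, mm_eq hq, bb_shift h]
  have h1 : aa q hq x ≤ aa q hq (x + t • vv p) := by
    rw [le_aa_iff]
    intro i hi
    have h2 := (le_aa_iff hq x _).1 le_rfl i hi
    simp only [Pi.add_apply, Pi.smul_apply, smul_eq_mul, vv]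
    by_cases hp : p i = 0
    · simp [hp, h2]
    · have h3 := sign_mul_self' (p i) hp
      rw [h i hp] at h2 ⊢
      nlinarith
  exact max_le_max (by linarith) le_rfl

lemma mm_shift {n : ℕ} {p : Fin n → SignType} (hp : p ≠ 0) (x : Fin n → ℝ) (t : ℝ)
    (h0 : 0 < mm p x) (h1 : 0 ≤ mm p x + t) : mm p (x + t • vv p) = mm p x + t := by
  have ha : aa p hp (x + t • vv p) = aa p hp x + t := by
    apply le_antisymm
    · rw [← sub_le_iff_le_add, le_aa_iff]
      intro i hi
      have h2 := (le_aa_iff hp (x + t • vv p) _).1 le_rfl i hi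
      have h3 := sign_mul_self' (p i) hi
      simp only [Pi.add_apply, Pi.smul_apply, smul_eq_mul, vv] at h2
      nlinarith
    · rw [le_aa_iff]
      intro i hi
      have h2 := (le_aa_iff hp x _).1 le_rfl i hi
      have h3 := sign_mul_self' (p i) hi
      simp only [Pi.add_apply, Pi.smul_apply, smul_eq_mul, vv]
      nlinarith
  have hm := mm_eq hp x
  have hb : mm p x = aa p hp x - bb p x := by
    rcases le_total (aa p hp x - bb p x) 0 with h | h
    · rw [max_eq_right h] at hm; linarith
    · rwa [max_eq_left h] at hm
  rw [mm_eq hp (x + t • vv p), ha, bb_shift (fun i _ => rfl), max_eq_left (by linarith)]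
  linarith

lemma mm_flip {n : ℕ} (p ε : Fin n → SignType) (hε : ∀ i, ε i ≠ 0) (x : Fin n → ℝ) :
    mm p (fun i => (ε i : ℝ) * x i) = mm (fun i => ε i * p i) x := by
  unfold mm
  congr 1
  ext s
  simp only [Set.mem_ofPred_eq]
  refine and_congr_right fun hs => ?_
  rw [funext_iff, funext_iff]
  refine forall_congr' fun i => ?_
  simp only [pat]
  have h1 : |(ε i : ℝ) * x i| = |x i| := by
    rw [abs_mul]
    have := hε i
    generalize ε i = a at this
    cases a <;> simp_all
  have h2 : SignType.sign ((ε i : ℝ) * x i) = ε i * SignType.sign (x i) := by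
    rw [sign_mul]
    generalize ε i = a
    cases a <;> simp
  rw [h1, h2]
  have h3 := hε i
  generalize ε i = a at h3
  generalize p i = b
  generalize SignType.sign (x i) = c
  split_ifs
  · revert a b c; decide
  · revert a b; decide

lemma mm_perm {n : ℕ} (p : Fin n → SignType) (π : Equiv.Perm (Fin n)) (x : Fin n → ℝ) :
    mm p (fun i => x (π i)) = mm (fun i => p (π.symm i)) x := by
  unfold mm
  congr 1
  ext s
  simp only [Set.mem_ofPred_eq]
  refine and_congr_right fun hs => ?_
  constructor
  · rintro rfl
    ext i; simp [pat]
  · intro h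
    ext i
    have := congrFun h (π i)
    simp [pat] at this ⊢
    rw [this]

lemma mm_cover {n : ℕ} (x : Fin n → ℝ) (h0 : ∀ i, x i ≠ 0) (hd : ∀ i j, i ≠ j → |x i| ≠ |x j|)
    (k : ℕ) (hk : 1 ≤ k) (hkn : k ≤ n) : ∃! p : Fin n → SignType, (sp p).card = k ∧ 0 < mm p x := by
  have hsp : ∀ s, 0 ≤ s → sp (pat x s) = Finset.univ.filter fun i => s < |x i| := by
    intro s hs
    ext i
    simp only [sp, pat, Finset.mem_filter, Finset.mem_univ, true_and]
    by_cases h : s < |x i| <;> simp [h, h0 i]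
  have hex : ∃ s, 0 ≤ s ∧ (Finset.univ.filter fun i => s < |x i|).card = k := by
    rcases hkn.eq_or_lt with h | h
    · refine ⟨0, le_rfl, ?_⟩
      rw [Finset.filter_true_of_mem (by intro i _; exact abs_pos.2 (h0 i))]
      simp [h]
    · let rk : Fin n → Fin n := fun i =>
        ⟨(Finset.univ.filter fun j => |x i| < |x j|).card, by
          have : (Finset.univ.filter fun j => |x i| < |x j|) ⊂ Finset.univ := by
            rw [Finset.ssubset_univ_iff]
            intro hh
            have : i ∈ (Finset.univ.filter fun j => |x i| < |x j|) := by rw [hh]; simp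
            simp at this
          simpa using Finset.card_lt_card this⟩
      have hlt : ∀ i j, |x i| < |x j| → rk j < rk i := by
        intro i j hij
        rw [Fin.lt_def]
        change (Finset.univ.filter fun l => |x j| < |x l|).card
          < (Finset.univ.filter fun l => |x i| < |x l|).card
        apply Finset.card_lt_card
        rw [Finset.ssubset_iff_of_subset]
        · exact ⟨j, by simpa using hij, by simp⟩
        · intro l hl
          simp only [Finset.mem_filter, Finset.mem_univ, true_and] at hl ⊢
          exact hij.trans hl
      have hinj : Function.Injective rk := by
        intro i j hij
        by_contra hne
        rcases lt_or_gt_of_ne (hd i j hne) with h | h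
        · exact (hlt i j h).ne hij.symm
        · exact (hlt j i h).ne hij
      obtain ⟨i, hi⟩ := (Finite.injective_iff_surjective.1 hinj) ⟨k, h⟩
      exact ⟨|x i|, abs_nonneg _, congrArg Fin.val hi⟩
  have hne : ∀ p : Fin n → SignType, (sp p).card = k → p ≠ 0 := by
    rintro p hp rfl
    simp [sp] at hp; omega
  obtain ⟨s, hs, hcard⟩ := hex
  have hc : (sp (pat x s)).card = k := by rw [hsp s hs, hcard]
  refine ⟨pat x s, ⟨hc, (mm_pos_iff (hne _ hc) x).2 ⟨s, hs, rfl⟩⟩, ?_⟩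
  rintro q ⟨hq, hq2⟩
  obtain ⟨r, hr, rfl⟩ := (mm_pos_iff (hne _ hq) x).1 hq2
  have hsub : sp (pat x r) = sp (pat x s) := by
    rw [hsp s hs, hsp r hr] at *
    rcases le_total r s with h | h
    · symm
      apply Finset.eq_of_subset_of_card_le
      · intro i hi
        simp only [Finset.mem_filter, Finset.mem_univ, true_and] at hi ⊢
        exact h.trans_lt hi
      · rw [hq, hc]
    · apply Finset.eq_of_subset_of_card_le
      · intro i hi
        simp only [Finset.mem_filter, Finset.mem_univ, true_and] at hi ⊢
        exact h.trans_lt hi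
      · rw [hq, hc]
  rw [hsp s hs, hsp r hr, Finset.ext_iff] at hsub
  ext i
  have := hsub i
  simp only [Finset.mem_filter, Finset.mem_univ, true_and] at this
  simp [pat, this]

/-- integral of the gradient -/
def GG {n : ℕ} (B : Set (Fin n → ℝ)) (f : (Fin n → ℝ) → ℝ) (u : Fin n → ℝ) : ℝ :=
  ∫ x in B, fderiv ℝ f x u

structure SymSet {n : ℕ} (B : Set (Fin n → ℝ)) : Prop where
  meas : MeasurableSet B
  fin : volume B ≠ ⊤
  flip : ∀ ε : Fin n → SignType, (∀ i, ε i ≠ 0) → ∀ x : Fin n → ℝ,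
    (fun i => (ε i : ℝ) * x i) ∈ B ↔ x ∈ B
  perm : ∀ π : Equiv.Perm (Fin n), ∀ x : Fin n → ℝ, (fun i => x (π i)) ∈ B ↔ x ∈ B

def flE {n : ℕ} (ε : Fin n → SignType) (hε : ∀ i, ε i ≠ 0) : (Fin n → ℝ) ≃L[ℝ] (Fin n → ℝ) :=
  LinearEquiv.toContinuousLinearEquiv
  { toFun := fun x i => (ε i : ℝ) * x i
    map_add' := fun x y => by ext i; simp [mul_add]
    map_smul' := fun c x => by ext i; simp; ring
    invFun := fun x i => (ε i : ℝ) * x i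
    left_inv := fun x => by ext i; simp [← mul_assoc, sign_mul_self' _ (hε i)]
    right_inv := fun x => by ext i; simp [← mul_assoc, sign_mul_self' _ (hε i)] }

def pmE {n : ℕ} (π : Equiv.Perm (Fin n)) : (Fin n → ℝ) ≃L[ℝ] (Fin n → ℝ) :=
  LinearEquiv.toContinuousLinearEquiv
  { toFun := fun x i => x (π i)
    map_add' := fun x y => by ext i; simp
    map_smul' := fun c x => by ext i; simp
    invFun := fun x i => x (π.symm i)
    left_inv := fun x => by ext i; simp
    right_inv := fun x => by ext i; simp }

lemma flE_apply {n : ℕ} (ε : Fin n → SignType) (hε : ∀ i, ε i ≠ 0) (x : Fin n → ℝ) :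
    flE ε hε x = fun i => (ε i : ℝ) * x i := rfl

lemma pmE_apply {n : ℕ} (π : Equiv.Perm (Fin n)) (x : Fin n → ℝ) :
    pmE π x = fun i => x (π i) := rfl

lemma flE_mp {n : ℕ} (ε : Fin n → SignType) (hε : ∀ i, ε i ≠ 0) :
    MeasurePreserving (flE ε hε) volume volume := by
  have : ∀ i, MeasurePreserving (fun x : ℝ => (ε i : ℝ) * x) volume volume := by
    intro i
    have := hε i
    generalize ε i = a at this
    cases a
    · simp at this
    · simpa using Measure.measurePreserving_neg (volume : Measure ℝ)
    · have h : (fun x : ℝ => ((SignType.pos : SignType) : ℝ) * x) = id := by ext x; simp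
      rw [h]
      exact MeasurePreserving.id (volume : Measure ℝ)
  exact volume_preserving_pi this

lemma pmE_mp {n : ℕ} (π : Equiv.Perm (Fin n)) :
    MeasurePreserving (pmE π) volume volume := by
  have := volume_measurePreserving_piCongrLeft (fun _ : Fin n => ℝ) π.symm
  convert this using 1
  funext x
  funext i
  have h := Equiv.piCongrLeft_apply_apply (fun _ : Fin n => ℝ) π.symm x (π i)
  rw [Equiv.symm_apply_apply] at h
  exact h.symm

lemma GG_comp {n : ℕ} (B : Set (Fin n → ℝ)) (f : (Fin n → ℝ) → ℝ) (u : Fin n → ℝ)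
    (g : (Fin n → ℝ) ≃L[ℝ] (Fin n → ℝ)) (hg : MeasurePreserving g volume volume)
    (hB : ∀ x, g x ∈ B ↔ x ∈ B) : GG B (f ∘ g) u = GG B f (g u) := by
  unfold GG
  have h1 : g ⁻¹' B = B := Set.ext hB
  rw [← hg.setIntegral_preimage_emb g.toHomeomorph.measurableEmbedding
    (fun x => fderiv ℝ f x (g u)), h1]
  congr 1
  ext x
  rw [g.comp_right_fderiv]
  rfl

lemma GG_add {n : ℕ} {B : Set (Fin n → ℝ)} (hB : SymSet B) {f : (Fin n → ℝ) → ℝ}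
    (hf : LipschitzWith 2 f) (u v : Fin n → ℝ) : GG B f (u + v) = GG B f u + GG B f v := by
  unfold GG
  simp only [map_add]
  exact integral_add (integrable_fderiv_lip hf hB.fin u) (integrable_fderiv_lip hf hB.fin v)

lemma GG_smul {n : ℕ} {B : Set (Fin n → ℝ)} {f : (Fin n → ℝ) → ℝ}
    (c : ℝ) (u : Fin n → ℝ) : GG B f (c • u) = c * GG B f u := by
  unfold GG
  simp only [map_smul, smul_eq_mul]
  exact integral_const_mul _ _

lemma GG_sum {n : ℕ} {B : Set (Fin n → ℝ)} (hB : SymSet B) {f : (Fin n → ℝ) → ℝ}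
    (hf : LipschitzWith 2 f) (u : Fin n → ℝ) :
    GG B f u = ∑ i, u i * GG B f (Pi.single i 1) := by
  unfold GG
  conv_lhs => enter [2, x]; rw [clm_apply_eq_sum]
  rw [integral_finsetSum]
  · exact Finset.sum_congr rfl fun i _ => integral_const_mul _ _
  · intro i _
    exact (integrable_fderiv_lip hf hB.fin _).const_mul _

lemma GG_flip_zero {n : ℕ} {B : Set (Fin n → ℝ)} (hB : SymSet B) {f : (Fin n → ℝ) → ℝ}
    (j : Fin n)
    (h : ∀ x : Fin n → ℝ, f (fun i => (((if i = j then -1 else 1 : SignType)) : ℝ) * x i) = f x) :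
    GG B f (Pi.single j 1) = 0 := by
  have hε : ∀ i, (fun i => (if i = j then -1 else 1 : SignType)) i ≠ 0 := by
    intro i; dsimp only; split_ifs <;> decide
  have h1 := GG_comp B f (Pi.single j 1) (flE _ hε) (flE_mp _ hε) (hB.flip _ hε)
  have h2 : f ∘ (flE _ hε) = f := funext h
  have h3 : flE _ hε (Pi.single j (1:ℝ)) = (-1 : ℝ) • Pi.single j (1:ℝ) := by
    ext i
    rw [flE_apply]
    by_cases hij : i = j
    · subst hij; simp
    · simp [hij]
  rw [h2, h3, GG_smul] at h1
  linarith

lemma GG_swap {n : ℕ} {B : Set (Fin n → ℝ)} (hB : SymSet B) (p : Fin n → SignType)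
    (i j : Fin n) (hi : p i ≠ 0) (hj : p j ≠ 0) :
    GG B (mm p) (Pi.single i 1) = p i * p j * GG B (mm p) (Pi.single j 1) := by
  by_cases hij : i = j
  · subst hij; rw [sign_mul_self' _ hi, one_mul]
  set ε : Fin n → SignType := fun k => if k = i ∨ k = j then p i * p j else 1 with hεd
  have hε : ∀ k, ε k ≠ 0 := by
    intro k; simp only [hεd]; split_ifs
    · exact mul_ne_zero hi hj
    · exact one_ne_zero
  set π := Equiv.swap i j
  have h0 : (mm p ∘ flE ε hε) ∘ pmE π = mm p := by
    ext x
    simp only [Function.comp, flE_apply, pmE_apply]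
    rw [mm_flip p ε hε, mm_perm _ π]
    congr 1
    ext k
    have hs : π.symm = π := Equiv.symm_swap i j
    rw [hs]
    by_cases hki : k = i
    · subst hki
      simp only [π, Equiv.swap_apply_left, hεd, or_true, if_true]
      have key : ∀ a b : SignType, b ≠ 0 → a * b * b = a := by decide
      exact key _ _ hj
    · by_cases hkj : k = j
      · subst hkj
        simp only [π, Equiv.swap_apply_right, hεd, true_or, if_true]
        have key : ∀ a b : SignType, b ≠ 0 → b * a * b = a := by decide
        exact key _ _ hi
      · simp [π, Equiv.swap_apply_of_ne_of_ne hki hkj, hεd, hki, hkj]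
  have h1 := GG_comp B (mm p) (pmE π (Pi.single i 1)) (flE ε hε) (flE_mp _ hε) (hB.flip _ hε)
  have h2 := GG_comp B (mm p ∘ flE ε hε) (Pi.single i 1) (pmE π) (pmE_mp _) (hB.perm _)
  rw [h0] at h2
  rw [h2, h1]
  have h3 : flE ε hε (pmE π (Pi.single i 1)) = ((p i : ℝ) * p j) • Pi.single j (1:ℝ) := by
    ext k
    rw [flE_apply, pmE_apply]
    by_cases hkj : k = j
    · subst hkj; simp [π, hεd]
    · by_cases hki : k = i
      · subst hki; simp [π, Ne.symm hij, hij]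
      · simp [π, Equiv.swap_apply_of_ne_of_ne hki hkj, hki, hkj]
  rw [h3, GG_smul]

lemma GG_mm_zero {n : ℕ} {B : Set (Fin n → ℝ)} (hB : SymSet B) (p : Fin n → SignType)
    (j : Fin n) (hj : p j = 0) : GG B (mm p) (Pi.single j 1) = 0 := by
  apply GG_flip_zero hB
  intro x
  rw [mm_flip p (fun i => if i = j then -1 else 1)]
  · congr 1
    ext i
    by_cases hij : i = j
    · subst hij; simp [hj]
    · simp [hij]
  · intro i; split_ifs <;> decide

lemma GG_mm_dir {n : ℕ} {B : Set (Fin n → ℝ)} (hB : SymSet B) (p : Fin n → SignType)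
    (u : Fin n → ℝ) :
    ((sp p).card : ℝ) * GG B (mm p) u = (∑ i, u i * vv p i) * GG B (mm p) (vv p) := by
  rw [GG_sum hB (mm_lip p) u, GG_sum hB (mm_lip p) (vv p)]
  have h1 : ∀ w : Fin n → ℝ, ∀ j, p j ≠ 0 → ∑ i, w i * GG B (mm p) (Pi.single i 1)
      = (∑ i, w i * vv p i) * (vv p j * GG B (mm p) (Pi.single j 1)) := by
    intro w j hj
    rw [Finset.sum_mul]
    refine Finset.sum_congr rfl fun i _ => ?_
    by_cases hi : p i = 0
    · rw [GG_mm_zero hB p i hi]; simp [vv, hi]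
    · rw [GG_swap hB p i j hi hj]; simp only [vv]; ring
  have hc : ((sp p).card : ℝ) = ∑ i, vv p i * vv p i := by
    rw [sp, Finset.card_filter]
    push_cast
    refine Finset.sum_congr rfl fun i _ => ?_
    by_cases hi : p i = 0
    · simp [vv, hi]
    · simp only [vv]; rw [sign_mul_self' _ hi]; simp [hi]
  by_cases hp : ∃ j, p j ≠ 0
  · obtain ⟨j, hj⟩ := hp
    rw [h1 u j hj, h1 (vv p) j hj, hc]; ring
  · push Not at hp
    simp [vv, hp, hc]

lemma mm_ae_diff {n : ℕ} {f : (Fin n → ℝ) → ℝ} (hf : LipschitzWith 2 f) :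
    ∀ᵐ x : Fin n → ℝ, DifferentiableAt ℝ f x := hf.ae_differentiableAt

lemma fderiv_of_shift {n : ℕ} {f : (Fin n → ℝ) → ℝ} {x u : Fin n → ℝ}
    (hd : DifferentiableAt ℝ f x)
    (h : ∀ᶠ t in nhds (0 : ℝ), f (x + t • u) = f x + t) : fderiv ℝ f x u = 1 := by
  have h1 : HasLineDerivAt ℝ f (fderiv ℝ f x u) x u := hd.hasFDerivAt.hasLineDerivAt u
  have h2 : HasDerivAt (fun t : ℝ => f (x + t • u)) (fderiv ℝ f x u) 0 := h1
  have h3 : HasDerivAt (fun t : ℝ => f (x + t • u)) 1 0 :=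
    HasDerivAt.congr_of_eventuallyEq ((hasDerivAt_id (0:ℝ)).const_add (f x)) h
  exact h2.unique h3

lemma fderiv_nonneg_of_mono {n : ℕ} {f : (Fin n → ℝ) → ℝ} {x u : Fin n → ℝ}
    (hd : DifferentiableAt ℝ f x)
    (h : ∀ y : Fin n → ℝ, ∀ t : ℝ, 0 ≤ t → f y ≤ f (y + t • u)) : 0 ≤ fderiv ℝ f x u := by
  have h1 : HasLineDerivAt ℝ f (fderiv ℝ f x u) x u := hd.hasFDerivAt.hasLineDerivAt u
  have h2 : HasDerivAt (fun t : ℝ => f (x + t • u)) (fderiv ℝ f x u) 0 := h1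
  rw [← h2.deriv]
  apply Monotone.deriv_nonneg
  intro s t hst
  have := h (x + s • u) (t - s) (by linarith)
  have h4 : x + s • u + (t - s) • u = x + t • u := by
    rw [add_assoc, ← add_smul]; congr 2; ring
  rwa [h4] at this

lemma mm_cont {n : ℕ} (p : Fin n → SignType) : Continuous (mm p) := (mm_lip p).continuous

lemma fderiv_mm {n : ℕ} {p : Fin n → SignType} (hp : p ≠ 0) {x : Fin n → ℝ}
    (hd : DifferentiableAt ℝ (mm p) x) :
    fderiv ℝ (mm p) x (vv p) = {x | 0 < mm p x}.indicator 1 x := by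
  by_cases h : 0 < mm p x
  · rw [Set.indicator_of_mem (by exact h), Pi.one_apply]
    apply fderiv_of_shift hd
    have : ∀ᶠ t in nhds (0:ℝ), - mm p x < t := lt_mem_nhds (by linarith)
    filter_upwards [this] with t ht
    exact mm_shift hp x t h (by linarith)
  · rw [Set.indicator_of_notMem (by exact h)]
    have h0 : mm p x = 0 := le_antisymm (not_lt.1 h) (mm_nonneg p x)
    have : IsLocalMin (mm p) x := Filter.Eventually.of_forall fun y => by
      rw [h0]; exact mm_nonneg p y
    rw [this.fderiv_eq_zero]; rfl

lemma GG_mm_vol {n : ℕ} {B : Set (Fin n → ℝ)} (hB : SymSet B) {p : Fin n → SignType} (hp : p ≠ 0) :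
    GG B (mm p) (vv p) = volume.real (B ∩ {x | 0 < mm p x}) := by
  have hm : MeasurableSet {x : Fin n → ℝ | 0 < mm p x} :=
    (isOpen_lt continuous_const (mm_cont p)).measurableSet
  unfold GG
  rw [setIntegral_congr_ae (g := {x | 0 < mm p x}.indicator 1) hB.meas]
  · rw [integral_indicator_one hm, measureReal_restrict_apply hm, Set.inter_comm]
  · filter_upwards [mm_ae_diff (mm_lip p)] with x hx _
    exact fderiv_mm hp hx

lemma vol_congr {n : ℕ} {B : Set (Fin n → ℝ)} (hB : SymSet B) (p q : Fin n → SignType)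
    (h : (sp p).card = (sp q).card) :
    volume.real (B ∩ {x | 0 < mm p x}) = volume.real (B ∩ {x | 0 < mm q x}) := by
  have e : {i // i ∈ sp q} ≃ {i // i ∈ sp p} := Finset.equivOfCardEq h.symm
  set π' : Equiv.Perm (Fin n) := Equiv.extendSubtype e with hπ'
  have hin : ∀ i, q i ≠ 0 → p (π' i) ≠ 0 := by
    intro i hi
    have : π' i ∈ sp p := Equiv.extendSubtype_mem e i (by simpa [sp] using hi)
    simpa [sp] using this
  have hout : ∀ i, q i = 0 → p (π' i) = 0 := by
    intro i hi
    have : π' i ∉ sp p := Equiv.extendSubtype_not_mem e i (by simpa [sp] using hi)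
    simpa [sp] using this
  set ε : Fin n → SignType := fun i => if p i = 0 then 1 else q (π'.symm i) * p i with hεd
  have hε : ∀ i, ε i ≠ 0 := by
    intro i
    simp only [hεd]
    split_ifs with hi
    · exact one_ne_zero
    · refine mul_ne_zero (fun hq => hi ?_) hi
      simpa using hout _ hq
  have h0 : ∀ x, mm p (flE ε hε (pmE π'.symm x)) = mm q x := by
    intro x
    simp only [flE_apply, pmE_apply]
    rw [mm_flip p ε hε, mm_perm _ π'.symm]
    congr 1
    ext i
    simp only [hεd, Equiv.symm_symm, Equiv.symm_apply_apply]
    by_cases hi : q i = 0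
    · simp [hi, hout i hi]
    · rw [if_neg (hin i hi)]
      have key : ∀ a b : SignType, b ≠ 0 → a * b * b = a := by decide
      exact key _ _ (hin i hi)
  set g := fun x => flE ε hε (pmE π'.symm x) with hg
  have hmp : MeasurePreserving g volume volume := (flE_mp ε hε).comp (pmE_mp _)
  have hset : B ∩ {x | 0 < mm q x} = g ⁻¹' (B ∩ {x | 0 < mm p x}) := by
    ext x
    simp only [Set.mem_inter_iff, Set.mem_preimage, Set.mem_ofPred_eq, hg, h0]
    have h1 := hB.flip ε hε (pmE π'.symm x)
    have h2 := hB.perm π'.symm x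
    rw [flE_apply, h1, pmE_apply, h2]
  rw [hset, measureReal_def, measureReal_def, hmp.measure_preimage]
  exact (hB.meas.inter (isOpen_lt continuous_const (mm_cont p)).measurableSet).nullMeasurableSet

lemma ae_generic (n : ℕ) : ∀ᵐ x : Fin n → ℝ, (∀ i, x i ≠ 0) ∧ ∀ i j, i ≠ j → |x i| ≠ |x j| := by
  have key : ∀ w : (Fin n → ℝ) →ₗ[ℝ] ℝ, w ≠ 0 → ∀ᵐ x : Fin n → ℝ, w x ≠ 0 := by
    intro w hw
    have := Measure.addHaar_submodule (volume : Measure (Fin n → ℝ)) (LinearMap.ker w)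
      (by rwa [Ne, LinearMap.ker_eq_top])
    rw [ae_iff]
    convert this using 2
    ext x; simp
  have h1 : ∀ i, ∀ᵐ x : Fin n → ℝ, x i ≠ 0 := fun i => by
    refine key (LinearMap.proj i) fun h => ?_
    simpa using LinearMap.congr_fun h (Pi.single i 1)
  have h2 : ∀ i j, i ≠ j → ∀ᵐ x : Fin n → ℝ, |x i| ≠ |x j| := fun i j hij => by
    have a1 := key ((LinearMap.proj i : (Fin n → ℝ) →ₗ[ℝ] ℝ) - LinearMap.proj j) (fun h => by
      simpa [hij, hij.symm] using LinearMap.congr_fun h (Pi.single i 1))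
    have a2 := key ((LinearMap.proj i : (Fin n → ℝ) →ₗ[ℝ] ℝ) + LinearMap.proj j) (fun h => by
      simpa [hij, hij.symm] using LinearMap.congr_fun h (Pi.single i 1))
    filter_upwards [a1, a2] with x h1 h2 h3
    rcases abs_eq_abs.1 h3 with h | h
    · exact h1 (by simp [h])
    · exact h2 (by simp [h])
  have h3 : ∀ᵐ x : Fin n → ℝ, ∀ i, x i ≠ 0 := ae_all_iff.2 h1
  have h4 : ∀ᵐ x : Fin n → ℝ, ∀ i j, i ≠ j → |x i| ≠ |x j| := by
    rw [ae_all_iff]; intro i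
    rw [ae_all_iff]; intro j
    by_cases hij : i = j
    · simp [hij]
    · filter_upwards [h2 i j hij] with x hx _ using hx
  filter_upwards [h3, h4] with x hx1 hx2 using ⟨hx1, hx2⟩

lemma vol_sum {n : ℕ} {B : Set (Fin n → ℝ)} (hB : SymSet B) (k : ℕ) (hk : 1 ≤ k) (hkn : k ≤ n) :
    ∑ p ∈ (Finset.univ.filter fun p : Fin n → SignType => (sp p).card = k),
      volume.real (B ∩ {x | 0 < mm p x}) = volume.real B := by
  classical
  have hm : ∀ p : Fin n → SignType, MeasurableSet {x : Fin n → ℝ | 0 < mm p x} := fun p =>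
    (isOpen_lt continuous_const (mm_cont p)).measurableSet
  have h1 : ∀ p : Fin n → SignType, volume.real (B ∩ {x | 0 < mm p x})
      = ∫ x in B, {x | 0 < mm p x}.indicator (1 : (Fin n → ℝ) → ℝ) x := by
    intro p
    rw [integral_indicator_one (hm p), measureReal_restrict_apply (hm p), Set.inter_comm]
  simp_rw [h1]
  have hBf : IsFiniteMeasure (volume.restrict B) := ⟨by
    rw [Measure.restrict_apply_univ]; exact hB.fin.lt_top⟩
  rw [← integral_finsetSum]
  · have h2 : ∫ x in B, (1 : ℝ) = volume.real B := by simp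
    rw [← h2]
    apply setIntegral_congr_ae hB.meas
    filter_upwards [ae_generic n] with x hx _
    obtain ⟨p, ⟨hp1, hp2⟩, hu⟩ := mm_cover x hx.1 hx.2 k hk hkn
    rw [Finset.sum_eq_single_of_mem p (by simpa using hp1)]
    · rw [Set.indicator_of_mem (by exact hp2)]; rfl
    · intro q hq hqp
      apply Set.indicator_of_notMem
      intro hh
      exact hqp (hu q ⟨by simpa using hq, hh⟩)
  · intro p _
    exact (integrable_const (1:ℝ)).indicator (hm p)

/-- weights -/
def th {n : ℕ} (p : Fin n → SignType) : ℝ :=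
  1 / ((Finset.univ.filter fun q : Fin n → SignType => (sp q).card = (sp p).card).card : ℝ)

lemma th_nonneg {n : ℕ} (p : Fin n → SignType) : 0 ≤ th p := by unfold th; positivity

lemma th_le_one {n : ℕ} (p : Fin n → SignType) : th p ≤ 1 := by
  unfold th
  rw [div_le_one₀]
  · exact_mod_cast Finset.card_pos.2 ⟨p, by simp⟩
  · exact_mod_cast Finset.card_pos.2 ⟨p, by simp⟩

lemma sp_card_pos {n : ℕ} {p : Fin n → SignType} (hp : p ≠ 0) : 0 < (sp p).card :=
  Finset.card_pos.2 (sp_nonempty hp)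

lemma GG_mm {n : ℕ} {B : Set (Fin n → ℝ)} (hB : SymSet B) {p : Fin n → SignType} (hp : p ≠ 0)
    (u : Fin n → ℝ) :
    GG B (mm p) u = volume.real B * (th p * ((∑ i, u i * vv p i) / (sp p).card)) := by
  have h1 := GG_mm_dir hB p u
  have hk := sp_card_pos hp
  have h2 := vol_sum hB (sp p).card hk (by simpa using Finset.card_le_univ (sp p))
  have h3 : ∀ q ∈ (Finset.univ.filter fun q : Fin n → SignType => (sp q).card = (sp p).card),
      volume.real (B ∩ {x | 0 < mm q x}) = volume.real (B ∩ {x | 0 < mm p x}) := fun q hq =>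
    vol_congr hB q p (by simpa using hq)
  rw [Finset.sum_congr rfl h3, Finset.sum_const, nsmul_eq_mul] at h2
  rw [GG_mm_vol hB hp] at h1
  have hN : (0 : ℝ) < ((Finset.univ.filter fun q : Fin n → SignType =>
    (sp q).card = (sp p).card).card : ℝ) := by exact_mod_cast Finset.card_pos.2 ⟨p, by simp⟩
  have hk' : (0 : ℝ) < (sp p).card := by exact_mod_cast hk
  rw [← h2, th]
  field_simp
  linarith

lemma GG_mm_zero_fun {n : ℕ} {B : Set (Fin n → ℝ)} (u : Fin n → ℝ) :
    GG B (mm (0 : Fin n → SignType)) u = 0 := by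
  have : (mm (0 : Fin n → SignType)) = fun _ => 0 := funext mm_zero
  unfold GG
  rw [this]; simp

def bmp {n : ℕ} (r s : Fin n → SignType) (x : Fin n → ℝ) : ℝ := min (mm r x) (mm s x)

lemma bmp_nonneg {n : ℕ} (r s : Fin n → SignType) (x : Fin n → ℝ) : 0 ≤ bmp r s x :=
  le_min (mm_nonneg _ _) (mm_nonneg _ _)

lemma bmp_lip {n : ℕ} (r s : Fin n → SignType) : LipschitzWith 2 (bmp r s) := by
  have := (mm_lip r).min (mm_lip s)
  rw [max_self] at this
  exact this

lemma GG_bound {n : ℕ} {B : Set (Fin n → ℝ)} (hB : SymSet B) {f : (Fin n → ℝ) → ℝ}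
    (hf : LipschitzWith 2 f) (u : Fin n → ℝ) : |GG B f u| ≤ 2 * volume.real B * ‖u‖ := by
  unfold GG
  have := norm_setIntegral_le_of_norm_le_const (μ := volume) (s := B) (C := 2 * ‖u‖)
    (f := fun x => fderiv ℝ f x u) hB.fin.lt_top (fun x _ => fderiv_lip_bound hf x u)
  rw [Real.norm_eq_abs] at this
  linarith

lemma GG_bmp_lower {n : ℕ} {B : Set (Fin n → ℝ)} (hB : SymSet B) {r s : Fin n → SignType}
    (hr : r ≠ 0) (hmono : ∀ y : Fin n → ℝ, ∀ t : ℝ, 0 ≤ t → mm s y ≤ mm s (y + t • vv r))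
    (x0 : Fin n → ℝ) (hx0 : x0 ∈ interior B) (h1 : 0 < mm r x0) (h2 : mm r x0 < mm s x0) :
    0 < GG B (bmp r s) (vv r) := by
  set U : Set (Fin n → ℝ) := {x | 0 < mm r x} ∩ {x | mm r x < mm s x} with hU
  have hUo : IsOpen U := (isOpen_lt continuous_const (mm_cont r)).inter
    (isOpen_lt (mm_cont r) (mm_cont s))
  have hpos : 0 < volume.real (B ∩ U) := by
    have : 0 < volume (interior B ∩ U) :=
      (isOpen_interior.inter hUo).measure_pos volume ⟨x0, hx0, h1, h2⟩
    have h3 : volume (interior B ∩ U) ≤ volume (B ∩ U) :=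
      measure_mono (Set.inter_subset_inter_left _ interior_subset)
    refine ENNReal.toReal_pos (this.trans_le h3).ne' ?_
    exact measure_ne_top_of_subset Set.inter_subset_left hB.fin
  refine hpos.trans_le ?_
  have hm := hUo.measurableSet
  have hBf : IsFiniteMeasure (volume.restrict B) := ⟨by
    rw [Measure.restrict_apply_univ]; exact hB.fin.lt_top⟩
  have e1 : volume.real (B ∩ U) = ∫ x in B, U.indicator (1 : (Fin n → ℝ) → ℝ) x := by
    rw [integral_indicator_one hm, measureReal_restrict_apply hm, Set.inter_comm]
  rw [e1]
  unfold GG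
  apply setIntegral_mono_ae
  · exact (integrable_const (1:ℝ)).indicator hm
  · exact integrable_fderiv_lip (bmp_lip r s) hB.fin _
  filter_upwards [mm_ae_diff (bmp_lip r s)] with x hd
  by_cases hx : x ∈ U
  · rw [Set.indicator_of_mem hx, Pi.one_apply]
    refine (fderiv_of_shift hd ?_).ge
    have c1 : ContinuousAt (fun t : ℝ => x + t • vv r) 0 := by fun_prop
    have e2 : ∀ᶠ t in nhds (0:ℝ), x + t • vv r ∈ U := by
      apply c1.eventually_mem
      simpa using hUo.mem_nhds hx
    have e3 : ∀ᶠ t in nhds (0:ℝ), - mm r x < t := lt_mem_nhds (by linarith [hx.1.out])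
    filter_upwards [e2, e3] with t ht ht2
    unfold bmp
    rw [min_eq_left (le_of_lt ht.2), min_eq_left (le_of_lt hx.2)]
    exact mm_shift hr x t hx.1 (by linarith)
  · rw [Set.indicator_of_notMem hx]
    apply fderiv_nonneg_of_mono hd
    intro y t ht
    exact min_le_min (mm_mono_right (fun i _ => rfl) y t ht) (hmono y t ht)

lemma exists_kappa {n : ℕ} (B : Set (Fin n → ℝ)) : ∃ κ : ℝ, 0 < κ ∧
    ∀ r s : Fin n → SignType, 0 < GG B (bmp r s) (vv r) → κ ≤ GG B (bmp r s) (vv r) := by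
  classical
  set F : Finset ((Fin n → SignType) × (Fin n → SignType)) :=
    Finset.univ.filter fun c => 0 < GG B (bmp c.1 c.2) (vv c.1) with hF
  by_cases hne : F.Nonempty
  · obtain ⟨c, hc, hmin⟩ := F.exists_min_image (fun c => GG B (bmp c.1 c.2) (vv c.1)) hne
    refine ⟨GG B (bmp c.1 c.2) (vv c.1), by simpa [hF] using hc, fun r s h => ?_⟩
    exact hmin (r, s) (by simpa [hF] using h)
  · refine ⟨1, one_pos, fun r s h => ?_⟩
    exact absurd ⟨(r, s), by simpa [hF] using h⟩ hne

lemma GG_bmp_zero {n : ℕ} {B : Set (Fin n → ℝ)} (hB : SymSet B) (r s : Fin n → SignType)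
    (j : Fin n) (hr : r j = 0) (hs : s j = 0) : GG B (bmp r s) (Pi.single j 1) = 0 := by
  apply GG_flip_zero hB
  intro x
  have key : ∀ p : Fin n → SignType, p j = 0 →
      mm p (fun i => (((if i = j then -1 else 1 : SignType)) : ℝ) * x i) = mm p x := by
    intro p hj
    rw [mm_flip p (fun i => if i = j then -1 else 1)]
    · congr 1
      ext i
      by_cases hij : i = j
      · subst hij; simp [hj]
      · simp [hij]
    · intro i; split_ifs <;> decide
  unfold bmp
  rw [key r hr, key s hs]

lemma vol_lower2 {n : ℕ} {B : Set (Fin n → ℝ)} (hB : SymSet B) : ∃ C ρ0 : ℝ, 0 ≤ C ∧ 0 < ρ0 ∧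
    ∀ (X : (Fin n → SignType) → Fin n → ℝ) (r s : Fin n → SignType) (w : Fin n → ℝ) (ρ : ℝ),
      0 ≤ ρ → ρ ≤ ρ0 → (∀ p, ‖X p‖ ≤ ρ) → ‖w‖ ≤ ρ →
      ENNReal.ofReal (volume.real B
          + volume.real B * (∑ p, th p * ((∑ i, X p i * vv p i) / (sp p).card))
          + GG B (bmp r s) w - C * ρ ^ 2)
        ≤ volume ((fun x => x + ((∑ p, mm p x • X p) + bmp r s x • w)) '' B) := by
  classical
  set P := Fin n → SignType
  set f : P ⊕ (P × P) → (Fin n → ℝ) → ℝ := fun j => Sum.elim (fun p => mm p)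
    (fun c => bmp c.1 c.2) j with hf
  have hfl : ∀ j, LipschitzWith 2 (f j) := by
    rintro (p | c)
    · exact mm_lip p
    · exact bmp_lip _ _
  obtain ⟨C, ρ0, hC, hρ0, h⟩ := vol_lower f hfl B hB.meas hB.fin
  refine ⟨C, ρ0, hC, hρ0, fun X r s w ρ h0 h1 hX hw => ?_⟩
  set u : P ⊕ (P × P) → Fin n → ℝ := fun j => Sum.elim X (fun c => if c = (r, s) then w else 0) j
    with hu
  have hub : ∀ j, ‖u j‖ ≤ ρ := by
    rintro (p | c)
    · exact hX p
    · simp only [hu, Sum.elim_inr]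
      split_ifs
      · exact hw
      · simpa using h0
  have key := h u ρ h0 h1 hub
  have e1 : (∑ j, ∫ x in B, fderiv ℝ (f j) x (u j))
      = volume.real B * (∑ p, th p * ((∑ i, X p i * vv p i) / (sp p).card))
        + GG B (bmp r s) w := by
    rw [Fintype.sum_sum_type]
    congr 1
    · rw [Finset.mul_sum]
      refine Finset.sum_congr rfl fun p _ => ?_
      by_cases hp : p = 0
      · subst hp
        have := GG_mm_zero_fun (B := B) (X 0)
        refine this.trans ?_
        have hv : vv (0 : P) = 0 := by
          funext i
          simp [vv, P]
        rw [hv]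
        simp
      · exact GG_mm hB hp (X p)
    · rw [Finset.sum_eq_single (r, s)]
      · simp only [hf, hu, Sum.elim_inr, if_true]; rfl
      · intro c _ hc
        simp [hu, hc]
      · simp
  have e2 : ∀ x, ∑ j, f j x • u j = (∑ p, mm p x • X p) + bmp r s x • w := by
    intro x
    rw [Fintype.sum_sum_type]
    congr 1
    rw [Finset.sum_eq_single (r, s)]
    · simp only [hf, hu, Sum.elim_inr, if_true]
    · intro c _ hc
      simp [hu, hc]
    · simp
  rw [e1] at key
  simp_rw [e2] at key
  rw [add_assoc (volume.real B)]
  exact key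

def Binf (n : ℕ) : Set (Fin n → ℝ) := {x | ∀ i, |x i| ≤ 1}
def Bone (n : ℕ) : Set (Fin n → ℝ) := {x | ∑ i, |x i| ≤ 1}

lemma Binf_eq (n : ℕ) : Binf n = Set.Icc (fun _ => -1) (fun _ => 1) := by
  ext x
  simp only [Binf, Set.mem_ofPred_eq, Set.mem_Icc, Pi.le_def, abs_le, forall_and]

lemma vol_Binf (n : ℕ) : volume (Binf n) = 2 ^ n := by
  rw [Binf_eq, Real.volume_Icc_pi]
  norm_num

lemma vol_Bone (n : ℕ) (hn : 2 ≤ n) : volume (Bone n) = ENNReal.ofReal (2 ^ n / n.factorial) := by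
  have hne : Nonempty (Fin n) := ⟨⟨0, by omega⟩⟩
  have := MeasureTheory.volume_sum_rpow_le (ι := Fin n) (p := 1) le_rfl 1
  simp only [Real.rpow_one, div_one, Fintype.card_fin, ENNReal.ofReal_one, one_pow, one_mul] at this
  rw [Bone, this, Real.Gamma_nat_eq_factorial]
  congr 2
  rw [show (1 : ℝ) + 1 = ((1 : ℕ) : ℝ) + 1 by norm_num, Real.Gamma_nat_eq_factorial]
  simp

lemma sym_Binf (n : ℕ) : SymSet (Binf n) where
  meas := by rw [Binf_eq]; exact measurableSet_Icc
  fin := by rw [vol_Binf]; exact ENNReal.pow_ne_top (by norm_num)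
  flip := fun ε hε x => by
    simp only [Binf, Set.mem_ofPred_eq]
    refine forall_congr' fun i => ?_
    have : |(ε i : ℝ)| = 1 := by
      have := hε i
      generalize ε i = a at this
      cases a <;> simp_all
    rw [abs_mul, this, one_mul]
  perm := fun π x => by
    simp only [Binf, Set.mem_ofPred_eq]
    exact π.forall_congr_left.symm.symm.trans (by simp) |>.symm.symm

lemma Bone_sub (n : ℕ) : Bone n ⊆ Binf n := fun x hx _ =>
  (Finset.single_le_sum (f := fun i => |x i|) (fun i _ => abs_nonneg _) (Finset.mem_univ _)).trans hx

lemma sym_Bone (n : ℕ) : SymSet (Bone n) where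
  meas := by
    have : IsClosed (Bone n) := isClosed_le (by fun_prop) continuous_const
    exact this.measurableSet
  fin := measure_ne_top_of_subset (Bone_sub n) (sym_Binf n).fin
  flip := fun ε hε x => by
    have h : ∑ i, |(ε i : ℝ) * x i| = ∑ i, |x i| := by
      refine Finset.sum_congr rfl fun i _ => ?_
      have : |(ε i : ℝ)| = 1 := by
        have := hε i
        generalize ε i = a at this
        cases a <;> simp_all
      rw [abs_mul, this, one_mul]
    simp only [Bone, Set.mem_ofPred_eq, h]
  perm := fun π x => by
    simp only [Bone, Set.mem_ofPred_eq, Equiv.sum_comp π (fun i => |x i|)]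

lemma abs_sign_eq (a : SignType) (ha : a ≠ 0) : |(a : ℝ)| = 1 := by
  cases a <;> simp_all

lemma bump_inf {n : ℕ} (hn : 2 ≤ n) (v : Fin n → SignType) (hv : ∀ i, v i ≠ 0) (i : Fin n) :
    0 < GG (Binf n) (bmp (Pi.single i (v i)) v) (vv (Pi.single i (v i))) := by
  set a : Fin n → SignType := Pi.single i (v i) with ha
  have ha0 : a ≠ 0 := by
    intro h; have := congrFun h i; simp [ha, hv] at this
  have hv0 : v ≠ 0 := fun h => hv i (congrFun h i)
  have hai : ∀ j, a j ≠ 0 → j = i := by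
    intro j hj; by_contra h; exact hj (by simp [ha, h])
  have hsub : SubPat a v := by
    intro j hj; have := hai j hj; subst this; simp [ha]
  set x0 : Fin n → ℝ := fun j => if j = i then 3 / 4 * (v j : ℝ) else 1 / 2 * (v j : ℝ) with hx0
  have m1 : mm a x0 = 1 / 4 := by
    rw [mm_eq ha0]
    have h1 : aa a ha0 x0 = 3 / 4 := by
      have e : (a i : ℝ) * x0 i = 3 / 4 := by
        simp only [ha, hx0, Pi.single_eq_same, if_true]
        linear_combination 3 / 4 * sign_mul_self' _ (hv i)
      apply le_antisymm
      · rw [← e]; exact (le_aa_iff ha0 x0 _).1 le_rfl i (by simp [ha, hv])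
      · rw [le_aa_iff]; intro j hj; rw [hai j hj, e]
    have h2 : bb a x0 = 1 / 2 := by
      apply le_antisymm
      · rw [bb_le_iff _ _ _ (by norm_num)]
        intro j hj
        have hji : j ≠ i := by rintro rfl; simp [ha, hv] at hj
        simp only [hx0, if_neg hji, abs_mul, abs_sign_eq _ (hv j)]; norm_num
      · have : Nontrivial (Fin n) := Fin.nontrivial_iff_two_le.2 hn
        obtain ⟨j, hji⟩ := exists_ne i
        have := (bb_le_iff a x0 _ (bb_nonneg a x0)).1 le_rfl j (by simp [ha, hji])
        simp only [hx0, if_neg hji, abs_mul, abs_sign_eq _ (hv j)] at this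
        norm_num at this ⊢
        exact this
    rw [h1, h2]; norm_num
  have m2 : 1 / 2 ≤ mm v x0 := by
    rw [mm_eq hv0]
    have h1 : 1 / 2 ≤ aa v hv0 x0 := by
      rw [le_aa_iff]; intro j hj
      simp only [hx0]
      have := sign_mul_self' _ (hv j)
      split_ifs <;> nlinarith
    have h2 : bb v x0 ≤ 0 := by
      rw [bb_le_iff _ _ _ le_rfl]
      intro j hj; exact absurd hj (hv j)
    exact le_max_of_le_left (by linarith)
  refine GG_bmp_lower (sym_Binf n) ha0 (fun y t ht => mm_mono_left hsub y t ht) x0 ?_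
    (by rw [m1]; norm_num) (by rw [m1]; linarith)
  have hop : IsOpen {x : Fin n → ℝ | ∀ i, |x i| < 1} := by
    simp only [Set.ofPred_forall]
    exact isOpen_iInter_of_finite fun i => isOpen_lt (by fun_prop) continuous_const
  refine interior_maximal (fun x hx j => (hx j).le) hop ?_
  intro j
  simp only [hx0]
  split_ifs <;> rw [abs_mul, abs_sign_eq _ (hv j)] <;> norm_num [abs_of_pos]

lemma bump_one {n : ℕ} (i j : Fin n) (hij : j ≠ i) (σ τ : SignType) (hσ : σ ≠ 0) (hτ : τ ≠ 0) :
    0 < GG (Bone n) (bmp (Function.update (Pi.single i σ) j τ) (Pi.single i σ))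
      (vv (Function.update (Pi.single i σ) j τ)) := by
  set a : Fin n → SignType := Pi.single i σ with ha
  set q : Fin n → SignType := Function.update a j τ with hq
  have ha0 : a ≠ 0 := by
    intro h; have := congrFun h i; simp [ha, hσ] at this
  have hqj : q j = τ := by simp [hq]
  have hqi : q i = σ := by simp [hq, ha, hij.symm]
  have hq0 : q ≠ 0 := by
    intro h; have := congrFun h j; rw [hqj] at this; exact hτ this
  have hai : ∀ k, a k ≠ 0 → k = i := by
    intro k hk; by_contra h; exact hk (by simp [ha, h])
  have hqk : ∀ k, k ≠ i → k ≠ j → q k = 0 := by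
    intro k h1 h2; simp [hq, ha, h1, h2]
  have hsub : SubPat a q := by
    intro k hk; have := hai k hk; subst this; rw [hqi]; simp [ha]
  set x0 : Fin n → ℝ := fun k => if k = i then 3 / 8 * (σ : ℝ) else if k = j then 1 / 8 * (τ : ℝ)
    else 0 with hx0
  have x0i : x0 i = 3 / 8 * (σ : ℝ) := by simp [hx0]
  have x0j : x0 j = 1 / 8 * (τ : ℝ) := by simp [hx0, hij]
  have x0k : ∀ k, k ≠ i → k ≠ j → x0 k = 0 := by intro k h1 h2; simp [hx0, h1, h2]
  have hσ2 := sign_mul_self' _ hσ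
  have hτ2 := sign_mul_self' _ hτ
  have m1 : mm q x0 = 1 / 8 := by
    rw [mm_eq hq0]
    have h1 : aa q hq0 x0 = 1 / 8 := by
      have e : (q j : ℝ) * x0 j = 1 / 8 := by
        rw [hqj, x0j]; linear_combination 1 / 8 * hτ2
      apply le_antisymm
      · rw [← e]; exact (le_aa_iff hq0 x0 _).1 le_rfl j (by rw [hqj]; exact hτ)
      · rw [le_aa_iff]; intro k hk
        by_cases h1 : k = i
        · subst h1; rw [hqi, x0i]; linarith
        · by_cases h2 : k = j
          · subst h2; rw [e]
          · exact absurd (hqk k h1 h2) hk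
    have h2 : bb q x0 = 0 := by
      apply le_antisymm _ (bb_nonneg _ _)
      rw [bb_le_iff _ _ _ le_rfl]
      intro k hk
      rw [x0k k (by rintro rfl; exact hσ (hqi ▸ hk)) (by rintro rfl; exact hτ (hqj ▸ hk)), abs_zero]
    rw [h1, h2]; norm_num
  have m2 : 1 / 4 ≤ mm a x0 := by
    rw [mm_eq ha0]
    have h1 : 3 / 8 ≤ aa a ha0 x0 := by
      rw [le_aa_iff]; intro k hk
      have := hai k hk
      subst this
      rw [x0i]
      simp only [ha, Pi.single_eq_same]; linarith
    have h2 : bb a x0 ≤ 1 / 8 := by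
      rw [bb_le_iff _ _ _ (by norm_num)]
      intro k hk
      have h1 : k ≠ i := by rintro rfl; simp [ha, hσ] at hk
      by_cases h2 : k = j
      · subst h2; rw [x0j, abs_mul, abs_sign_eq _ hτ]; norm_num [abs_of_pos]
      · rw [x0k k h1 h2]; norm_num
    exact le_max_of_le_left (by linarith)
  refine GG_bmp_lower (sym_Bone n) hq0 (fun y t ht => mm_mono_right hsub y t ht) x0 ?_
    (by rw [m1]; norm_num) (by rw [m1]; linarith)
  have hop : IsOpen {x : Fin n → ℝ | ∑ i, |x i| < 1} := isOpen_lt (by fun_prop) continuous_const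
  have hsu : {x : Fin n → ℝ | ∑ i, |x i| < 1} ⊆ Bone n := fun x hx =>
    (le_of_lt (show ∑ i, |x i| < 1 from hx) : ∑ i, |x i| ≤ 1)
  refine interior_maximal hsu hop ?_
  change ∑ k, |x0 k| < 1
  rw [Finset.sum_eq_add i j hij.symm (fun k _ hk => by rw [x0k k hk.1 hk.2, abs_zero])
    (by simp) (by simp), x0i, x0j, abs_mul, abs_mul, abs_sign_eq _ hσ, abs_sign_eq _ hτ]
  norm_num [abs_of_pos]

def pol {n : ℕ} (K : Set (Fin n → ℝ)) : Set (Fin n → ℝ) := {y | ∀ x ∈ K, x ⬝ᵥ y ≤ 1}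

lemma bipolar {n : ℕ} {K : Set (Fin n → ℝ)} (hc : Convex ℝ K) (hcl : IsClosed K) (h0 : 0 ∈ K)
    (z : Fin n → ℝ) (hz : ∀ y ∈ pol K, z ⬝ᵥ y ≤ 1) : z ∈ K := by
  by_contra hzK
  obtain ⟨f, u, h1, h2⟩ := geometric_hahn_banach_closed_point hc hcl hzK
  have hu : 0 < u := by simpa using h1 0 h0
  have hf : ∀ x : Fin n → ℝ, x ⬝ᵥ (fun i => f (Pi.single i 1) / u) = f x / u := by
    intro x
    rw [clm_apply_eq_sum f x, Finset.sum_div]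
    simp only [dotProduct]
    exact Finset.sum_congr rfl fun i _ => by ring
  have h3 := hz (fun i => f (Pi.single i 1) / u) (fun x hx => by
    rw [hf, div_le_one₀ hu]; exact (h1 x hx).le)
  rw [hf, div_le_one₀ hu] at h3
  linarith

lemma sum_nonpos_of_prod {ι : Type*} [DecidableEq ι] (s : Finset ι) (a : ι → ℝ) (A t0 : ℝ)
    (hA : 0 < A) (ha : ∀ i, |a i| ≤ A)
    (ht0 : 0 < t0) (h : ∀ t, 0 ≤ t → t ≤ t0 → ∏ i ∈ s, (1 + t * a i) ≤ 1) : ∑ i ∈ s, a i ≤ 0 := by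
  obtain ⟨C, hC, hb⟩ := prod_one_add_bound s
  by_contra hpos
  push Not at hpos
  set σ := ∑ i ∈ s, a i with hσ
  set t := min t0 (min (1 / A) (σ / (2 * (C * A ^ 2 + 1)))) with ht
  have htpos : 0 < t := by
    refine lt_min ht0 (lt_min (by positivity) (by positivity))
  have h1 : t ≤ t0 := min_le_left _ _
  have h2 : t * A ≤ 1 := by
    have : t ≤ 1 / A := (min_le_right _ _).trans (min_le_left _ _)
    rwa [le_div_iff₀ hA] at this
  have h3 : t * (2 * (C * A ^ 2 + 1)) ≤ σ := by
    have : t ≤ σ / (2 * (C * A ^ 2 + 1)) := (min_le_right _ _).trans (min_le_right _ _)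
    rwa [le_div_iff₀ (by positivity)] at this
  have h4 := hb (fun i => t * a i) (t * A) (by positivity) h2 (fun i => by
    rw [abs_mul, abs_of_pos htpos]; exact mul_le_mul_of_nonneg_left (ha i) htpos.le)
  have h5 := h t htpos.le h1
  rw [← Finset.mul_sum, ← hσ] at h4
  have h6 := (abs_le.1 h4).1
  have h7 : t * σ ≤ t * (t * (C * A ^ 2)) := by nlinarith
  have h8 : σ ≤ t * (C * A ^ 2) := le_of_mul_le_mul_left h7 htpos
  nlinarith

structure NormK {n : ℕ} (K : Set (Fin n → ℝ)) (δ : ℝ) : Prop where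
  conv : Convex ℝ K
  closed : IsClosed K
  symm : ∀ x ∈ K, -x ∈ K
  sub : ∀ x ∈ K, ∀ i, |x i| ≤ 1
  e_mem : ∀ i, Pi.single i (1 : ℝ) ∈ K
  bd : ∀ y ∈ pol K, ∑ i, |y i| ≤ 1 + δ
  nonneg : 0 ≤ δ

lemma pol_closed {n : ℕ} (K : Set (Fin n → ℝ)) : IsClosed (pol K) := by
  have : pol K = ⋂ x ∈ K, {y | x ⬝ᵥ y ≤ 1} := by
    ext y; simp [pol]
  rw [this]
  refine isClosed_biInter fun x _ => isClosed_le ?_ continuous_const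
  unfold dotProduct
  fun_prop

lemma pol_convex {n : ℕ} (K : Set (Fin n → ℝ)) : Convex ℝ (pol K) := by
  intro y hy z hz a b ha hb hab x hx
  rw [dotProduct_add, dotProduct_smul, dotProduct_smul, smul_eq_mul, smul_eq_mul]
  have := hy x hx
  have := hz x hx
  nlinarith

lemma pol_symm {n : ℕ} {K : Set (Fin n → ℝ)} (hs : ∀ x ∈ K, -x ∈ K) (y : Fin n → ℝ)
    (hy : y ∈ pol K) : -y ∈ pol K := by
  intro x hx
  have := hy (-x) (hs x hx)
  rw [neg_dotProduct] at this
  rwa [dotProduct_neg]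

namespace NormK
variable {n : ℕ} {K : Set (Fin n → ℝ)} {δ : ℝ}

lemma zero_mem (h : NormK K δ) (i : Fin n) : 0 ∈ K := by
  have := h.conv (h.e_mem i) (h.symm _ (h.e_mem i)) (by norm_num : (0:ℝ) ≤ 1/2)
    (by norm_num : (0:ℝ) ≤ 1/2) (by norm_num)
  simpa using this

lemma bone_sub (h : NormK K δ) : Bone n ⊆ pol K := by
  intro y hy x hx
  have : x ⬝ᵥ y ≤ ∑ i, |y i| := by
    refine Finset.sum_le_sum fun i _ => ?_
    calc x i * y i ≤ |x i * y i| := le_abs_self _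
      _ = |x i| * |y i| := abs_mul _ _
      _ ≤ 1 * |y i| := mul_le_mul_of_nonneg_right (h.sub x hx i) (abs_nonneg _)
      _ = |y i| := one_mul _
  exact this.trans hy

lemma pol_abs (h : NormK K δ) (y : Fin n → ℝ) (hy : y ∈ pol K) (i : Fin n) : |y i| ≤ 1 := by
  have h1 := hy _ (h.e_mem i)
  have h2 := hy _ (h.symm _ (h.e_mem i))
  rw [neg_dotProduct] at h2
  simp only [single_dotProduct, one_mul] at h1 h2
  exact abs_le.2 ⟨by linarith, h1⟩

lemma pol_compact (h : NormK K δ) : IsCompact (pol K) := by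
  refine Metric.isCompact_of_isClosed_isBounded (pol_closed K) ?_
  refine (Metric.isBounded_closedBall (x := (0 : Fin n → ℝ)) (r := 1)).subset fun y hy => ?_
  rw [mem_closedBall_zero_iff, pi_norm_le_iff_of_nonneg zero_le_one]
  exact fun i => h.pol_abs y hy i

lemma sign_mem (h : NormK K δ) (i : Fin n) (σ : SignType) :
    vv (Pi.single i σ) ∈ K := by
  have hv : vv (Pi.single i σ) = (σ : ℝ) • (Pi.single i (1:ℝ)) := by
    ext j
    by_cases hj : j = i
    · subst hj; simp [vv]
    · simp [vv, hj]
  rw [hv]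
  cases σ
  · simpa using h.zero_mem i
  · simpa using h.symm _ (h.e_mem i)
  · simpa using h.e_mem i

end NormK

lemma sum_sp {n : ℕ} (p : Fin n → SignType) (g : Fin n → ℝ) (hg : ∀ i, p i = 0 → g i = 0) :
    ∑ i, g i = ∑ i ∈ sp p, g i := by
  symm
  apply Finset.sum_subset (Finset.subset_univ _)
  intro i _ hi
  exact hg i (by simpa [sp] using hi)

lemma sel_exists {n : ℕ} {K : Set (Fin n → ℝ)} {δ : ℝ} (h : NormK K δ) (p : Fin n → SignType)
    (hp : p ≠ 0) : ∃ X Y : Fin n → ℝ, X ∈ K ∧ Y ∈ pol K ∧ X ⬝ᵥ Y = 1 ∧ ‖X - vv p‖ ≤ n * δ ∧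
      ‖Y - ((sp p).card : ℝ)⁻¹ • vv p‖ ≤ δ := by
  have hk := sp_card_pos hp
  set k : ℝ := ((sp p).card : ℝ) with hkd
  have hk0 : 0 < k := by rw [hkd]; exact_mod_cast hk
  have hkn : k ≤ n := by
    rw [hkd]; exact_mod_cast (by simpa using Finset.card_le_univ (sp p))
  obtain ⟨i0, hi0⟩ := sp_nonempty hp
  set D : Set (Fin n → ℝ) := pol K ∩ {y | ∀ i, 0 ≤ (p i : ℝ) * y i} with hD
  have hDc : IsCompact D := by
    apply h.pol_compact.inter_right
    simp only [Set.ofPred_forall]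
    exact isClosed_iInter fun i => isClosed_le continuous_const (by fun_prop)
  have hmemsp : ∀ i, i ∈ sp p ↔ p i ≠ 0 := by intro i; simp [sp]
  have hy0 : k⁻¹ • vv p ∈ D := by
    constructor
    · apply h.bone_sub
      change ∑ i, |(k⁻¹ • vv p) i| ≤ 1
      have : ∀ i, |(k⁻¹ • vv p) i| = if p i ≠ 0 then k⁻¹ else 0 := by
        intro i
        by_cases hi : p i = 0
        · simp [vv, hi]
        · simp only [Pi.smul_apply, smul_eq_mul, abs_mul, vv, abs_sign_eq _ hi, mul_one,
            abs_of_pos (inv_pos.2 hk0)]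
          simp [hi]
      simp_rw [this]
      rw [← Finset.sum_filter, Finset.sum_const, nsmul_eq_mul]
      change k * k⁻¹ ≤ 1
      rw [mul_inv_cancel₀ hk0.ne']
    · intro i
      simp only [Pi.smul_apply, smul_eq_mul, vv]
      have := mul_self_nonneg (p i : ℝ)
      have := inv_pos.2 hk0
      nlinarith
  obtain ⟨Y, hYD, hmax⟩ := hDc.exists_isMaxOn ⟨_, hy0⟩
    (f := fun y => ∏ i ∈ sp p, (p i : ℝ) * y i) (by fun_prop)
  have hFpos : 0 < ∏ i ∈ sp p, (p i : ℝ) * Y i := by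
    refine lt_of_lt_of_le ?_ (hmax hy0)
    apply Finset.prod_pos
    intro i hi
    have := sign_mul_self' _ ((hmemsp i).1 hi)
    simp only [Pi.smul_apply, smul_eq_mul, vv]
    have h2 := inv_pos.2 hk0
    nlinarith
  have hYpos : ∀ i, p i ≠ 0 → 0 < (p i : ℝ) * Y i := by
    intro i hi
    refine lt_of_le_of_ne (hYD.2 i) fun h0 => ?_
    rw [Finset.prod_eq_zero ((hmemsp i).2 hi) h0.symm] at hFpos
    exact lt_irrefl _ hFpos
  have hY0 : ∀ i, p i ≠ 0 → Y i ≠ 0 := fun i hi h0 => by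
    have := hYpos i hi; rw [h0] at this; simp at this
  set X : Fin n → ℝ := fun i => if p i = 0 then 0 else 1 / (k * Y i) with hX
  have hXK : X ∈ K := by
    apply bipolar h.conv h.closed (h.zero_mem i0)
    intro z hz
    set a : Fin n → ℝ := fun i => if p i = 0 then 0 else z i / Y i - 1 with ha
    set A : ℝ := ∑ i, |a i| + 1 with hA
    have haA : ∀ i, |a i| ≤ A := fun i => by
      have := Finset.single_le_sum (f := fun i => |a i|) (fun i _ => abs_nonneg _)
        (Finset.mem_univ i)
      simp only [hA]; linarith
    have hApos : 1 ≤ A := by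
      have : 0 ≤ ∑ i, |a i| := Finset.sum_nonneg fun i _ => abs_nonneg _
      simp only [hA]; linarith
    have hsum : ∑ i ∈ sp p, a i ≤ 0 := by
      refine sum_nonpos_of_prod (sp p) a A (1 / A) (by linarith) haA (by positivity) ?_
      intro t ht0 ht1
      have ht2 : t * A ≤ 1 := by rwa [le_div_iff₀ (by linarith)] at ht1
      have ht3 : t ≤ 1 := by nlinarith
      set w := (1 - t) • Y + t • (fun i => if p i = 0 then z i else z i) with hw
      have hww : ∀ i, p i ≠ 0 → (p i : ℝ) * w i = (p i : ℝ) * Y i * (1 + t * a i) := by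
        intro i hi
        have := hY0 i hi
        simp only [hw, ha, Pi.add_apply, Pi.smul_apply, smul_eq_mul, if_neg hi, ite_self]
        field_simp
        ring
      have hwD : w ∈ D := by
        constructor
        · have : (fun i => if p i = 0 then z i else z i) = z := by ext i; simp
          rw [hw, this]
          exact pol_convex K hYD.1 hz (by linarith) ht0 (by ring)
        · intro i
          by_cases hi : p i = 0
          · simp [hi]
          · rw [hww i hi]
            apply mul_nonneg (hYpos i hi).le
            have h1 := (abs_le.1 (haA i)).1
            nlinarith
      have h1 := hmax hwD
      simp only [Set.mem_ofPred_eq] at h1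
      have h2 : ∏ i ∈ sp p, (p i : ℝ) * w i
          = (∏ i ∈ sp p, (p i : ℝ) * Y i) * ∏ i ∈ sp p, (1 + t * a i) := by
        rw [← Finset.prod_mul_distrib]
        exact Finset.prod_congr rfl fun i hi => hww i ((hmemsp i).1 hi)
      rw [h2] at h1
      exact le_of_mul_le_mul_left (by linarith) hFpos
    have e1 : X ⬝ᵥ z = ∑ i ∈ sp p, (a i + 1) / k := by
      rw [dotProduct, sum_sp p _ (fun i hi => by simp [hX, hi])]
      refine Finset.sum_congr rfl fun i hi => ?_
      have hi' := (hmemsp i).1 hi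
      have := hY0 i hi'
      simp only [hX, ha, if_neg hi']
      field_simp
      ring
    rw [e1, ← Finset.sum_div, Finset.sum_add_distrib, Finset.sum_const, nsmul_eq_mul, mul_one,
      div_le_one₀ hk0]
    linarith
  have hXY : X ⬝ᵥ Y = 1 := by
    rw [dotProduct, sum_sp p _ (fun i hi => by simp [hX, hi])]
    have : ∀ i ∈ sp p, X i * Y i = 1 / k := by
      intro i hi
      have hi' := (hmemsp i).1 hi
      have := hY0 i hi'
      simp only [hX, if_neg hi']
      field_simp
    rw [Finset.sum_congr rfl this, Finset.sum_const, nsmul_eq_mul]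
    field_simp
    rw [hkd]
  have habs : ∀ i, p i ≠ 0 → |Y i| = (p i : ℝ) * Y i := by
    intro i hi
    rw [← abs_of_pos (hYpos i hi), abs_mul, abs_sign_eq _ hi, one_mul]
  have hlow : ∀ i, p i ≠ 0 → 1 / k ≤ |Y i| := by
    intro i hi
    have h1 := h.sub X hXK i
    have h3 : 0 < |Y i| := abs_pos.2 (hY0 i hi)
    simp only [hX, if_neg hi, abs_div, abs_one, abs_mul, abs_of_pos hk0] at h1
    rw [div_le_one₀ (by positivity)] at h1
    rw [div_le_iff₀ hk0]
    linarith
  have hbd := h.bd Y hYD.1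
  have hsS : 1 ≤ ∑ i ∈ sp p, |Y i| := by
    have : ∑ i ∈ sp p, (1 / k) ≤ ∑ i ∈ sp p, |Y i| :=
      Finset.sum_le_sum fun i hi => hlow i ((hmemsp i).1 hi)
    rw [Finset.sum_const, nsmul_eq_mul] at this
    have e : k * (1 / k) = 1 := by field_simp
    linarith
  have hup : ∀ i, p i ≠ 0 → |Y i| ≤ 1 / k + δ := by
    intro i hi
    have h1 := Finset.add_sum_erase (sp p) (fun i => |Y i|) ((hmemsp i).2 hi)
    have h2 : ∑ i ∈ (sp p).erase i, (1 / k) ≤ ∑ i ∈ (sp p).erase i, |Y i| :=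
      Finset.sum_le_sum fun j hj => hlow j ((hmemsp j).1 (Finset.mem_of_mem_erase hj))
    have h3 := Finset.add_sum_erase (sp p) (fun _ => 1 / k) ((hmemsp i).2 hi)
    have e : k * (1 / k) = 1 := by field_simp
    have h3b : ∑ x ∈ sp p, 1 / k = 1 := by rw [Finset.sum_const, nsmul_eq_mul]; exact e
    have h4 : ∑ i ∈ sp p, |Y i| ≤ ∑ i, |Y i| :=
      Finset.sum_le_sum_of_subset_of_nonneg (Finset.subset_univ _) fun _ _ _ => abs_nonneg _
    linarith
  have hoff : ∀ i, p i = 0 → |Y i| ≤ δ := by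
    intro i hi
    have hni : i ∉ sp p := by simp [sp, hi]
    have h4 : ∑ j ∈ insert i (sp p), |Y j| ≤ ∑ i, |Y i| :=
      Finset.sum_le_sum_of_subset_of_nonneg (Finset.subset_univ _) fun _ _ _ => abs_nonneg _
    rw [Finset.sum_insert hni] at h4
    linarith
  have hδ := h.nonneg
  refine ⟨X, Y, hXK, hYD.1, hXY, ?_, ?_⟩
  · rw [pi_norm_le_iff_of_nonneg (by positivity)]
    intro i
    rw [Real.norm_eq_abs, Pi.sub_apply]
    by_cases hi : p i = 0
    · simp [hX, vv, hi]; positivity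
    · have h2 : X i - vv p i = (p i : ℝ) * (1 / (k * |Y i|) - 1) := by
        have hs := sign_mul_self' _ hi
        have hyp := (hYpos i hi).ne'
        have hY := hY0 i hi
        rw [habs i hi]
        simp only [hX, vv, if_neg hi]
        have hpn : (p i : ℝ) ≠ 0 := fun h0 => by rw [h0] at hs; simp at hs
        field_simp
        try ring
      rw [h2, abs_mul, abs_sign_eq _ hi, one_mul]
      have h3 : 0 < |Y i| := abs_pos.2 (hY0 i hi)
      have h4 : 1 ≤ k * |Y i| := by
        have := hlow i hi; rw [div_le_iff₀ hk0] at this; linarith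
      have h5 : k * |Y i| ≤ 1 + k * δ := by
        have := hup i hi
        have e : k * (1 / k) = 1 := by field_simp
        nlinarith
      have h6 : 1 / (k * |Y i|) ≤ 1 := by rw [div_le_one₀ (by positivity)]; exact h4
      have h7 : 1 - k * δ ≤ 1 / (k * |Y i|) := by
        rw [le_div_iff₀ (by positivity)]
        nlinarith [mul_nonneg hk0.le hδ]
      rw [abs_of_nonpos (by linarith)]
      nlinarith
  · rw [pi_norm_le_iff_of_nonneg hδ]
    intro i
    rw [Real.norm_eq_abs, Pi.sub_apply, Pi.smul_apply, smul_eq_mul]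
    by_cases hi : p i = 0
    · simpa [vv, hi] using hoff i hi
    · have h2 : Y i - k⁻¹ * vv p i = (p i : ℝ) * (|Y i| - k⁻¹) := by
        have hs := sign_mul_self' _ hi
        rw [habs i hi]
        simp only [vv]
        linear_combination (-(Y i)) * hs
      rw [h2, abs_mul, abs_sign_eq _ hi, one_mul]
      have h3 := hlow i hi
      have h4 := hup i hi
      rw [one_div] at h3 h4
      rw [abs_of_nonneg (by linarith)]
      linarith

structure Sel {n : ℕ} (K : Set (Fin n → ℝ)) (δ : ℝ)
    (X Y : (Fin n → SignType) → Fin n → ℝ) : Prop where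
  zX : X 0 = 0
  zY : Y 0 = 0
  mX : ∀ p, p ≠ 0 → X p ∈ K
  mY : ∀ p, p ≠ 0 → Y p ∈ pol K
  dXY : ∀ p, p ≠ 0 → X p ⬝ᵥ Y p = 1
  nX : ∀ p, p ≠ 0 → ‖X p - vv p‖ ≤ n * δ
  nY : ∀ p, p ≠ 0 → ‖Y p - ((sp p).card : ℝ)⁻¹ • vv p‖ ≤ δ
  sX : ∀ i σ, σ ≠ 0 → X (Pi.single i σ) = vv (Pi.single i σ)
  sY : ∀ i σ, σ ≠ 0 → Y (Pi.single i σ) = vv (Pi.single i σ)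

lemma sp_single {n : ℕ} (i : Fin n) (σ : SignType) (hσ : σ ≠ 0) :
    sp (Pi.single i σ : Fin n → SignType) = {i} := by
  ext j
  by_cases hj : j = i
  · subst hj; simp [sp, hσ]
  · simp [sp, hj]

lemma vv_single {n : ℕ} (i : Fin n) (σ : SignType) :
    vv (Pi.single i σ : Fin n → SignType) = Pi.single i (σ : ℝ) := by
  ext j
  by_cases hj : j = i
  · subst hj; simp [vv]
  · simp [vv, hj]

lemma sel_all {n : ℕ} {K : Set (Fin n → ℝ)} {δ : ℝ} (h : NormK K δ) : ∃ X Y, Sel K δ X Y := by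
  classical
  have key : ∀ p : Fin n → SignType, ∃ XY : (Fin n → ℝ) × (Fin n → ℝ),
      (p = 0 → XY.1 = 0 ∧ XY.2 = 0) ∧
      (p ≠ 0 → XY.1 ∈ K ∧ XY.2 ∈ pol K ∧ XY.1 ⬝ᵥ XY.2 = 1 ∧ ‖XY.1 - vv p‖ ≤ n * δ ∧
      ‖XY.2 - ((sp p).card : ℝ)⁻¹ • vv p‖ ≤ δ) ∧
      ((∃ i σ, σ ≠ 0 ∧ p = Pi.single i σ) → XY.1 = vv p ∧ XY.2 = vv p) := by
    intro p
    by_cases hp : p = 0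
    · refine ⟨(0, 0), fun _ => ⟨rfl, rfl⟩, fun h0 => absurd hp h0, ?_⟩
      rintro ⟨i, σ, hσ, rfl⟩
      exact absurd (by simpa using congrFun hp i) hσ
    · by_cases hs : ∃ i σ, σ ≠ 0 ∧ p = Pi.single i σ
      · refine ⟨(vv p, vv p), fun h0 => absurd h0 hp, fun _ => ?_, fun _ => ⟨rfl, rfl⟩⟩
        obtain ⟨i, σ, hσ, rfl⟩ := hs
        refine ⟨h.sign_mem i σ, h.bone_sub ?_, ?_, ?_, ?_⟩
        · change ∑ j, |vv (Pi.single i σ) j| ≤ 1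
          rw [vv_single, Finset.sum_eq_single i]
          · simp [abs_sign_eq _ hσ]
          · intro j _ hj; simp [hj]
          · simp
        · simp only []
          rw [vv_single, single_dotProduct, Pi.single_eq_same, sign_mul_self' _ hσ]
        · have := h.nonneg
          simp only [sub_self, norm_zero]; positivity
        · rw [sp_single i σ hσ]
          simpa using h.nonneg
      · obtain ⟨X, Y, hXY⟩ := sel_exists h p hp
        exact ⟨(X, Y), fun h0 => absurd h0 hp, fun _ => hXY, fun h0 => absurd h0 hs⟩
  choose F hF using key
  refine ⟨fun p => (F p).1, fun p => (F p).2, ?_⟩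
  exact
  { zX := ((hF 0).1 rfl).1
    zY := ((hF 0).1 rfl).2
    mX := fun p hp => ((hF p).2.1 hp).1
    mY := fun p hp => ((hF p).2.1 hp).2.1
    dXY := fun p hp => ((hF p).2.1 hp).2.2.1
    nX := fun p hp => ((hF p).2.1 hp).2.2.2.1
    nY := fun p hp => ((hF p).2.1 hp).2.2.2.2
    sX := fun i σ hσ => ((hF _).2.2 ⟨i, σ, hσ, rfl⟩).1
    sY := fun i σ hσ => ((hF _).2.2 ⟨i, σ, hσ, rfl⟩).2 }

lemma core_mem {n : ℕ} (x y w : Fin n → ℝ) (c : (Fin n → SignType) → ℝ)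
    (Z : (Fin n → SignType) → Fin n → ℝ) (r s : Fin n → SignType) (hr : r ≠ 0) (hs : s ≠ 0)
    (hrs : r ≠ s) (hZ : ∀ p, p ≠ 0 → Z p ⬝ᵥ y ≤ c p)
    (hw : w ⬝ᵥ y ≤ (c r - Z r ⬝ᵥ y) + (c s - Z s ⬝ᵥ y)) :
    (x + ((∑ p, mm p x • (Z p - vv p)) + bmp r s x • w)) ⬝ᵥ y ≤ ∑ p, c p * mm p x := by
  have e1 : x + ((∑ p, mm p x • (Z p - vv p)) + bmp r s x • w)
      = (∑ p, mm p x • Z p) + bmp r s x • w := by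
    conv_lhs => rw [show (∑ p, mm p x • (Z p - vv p)) = (∑ p, mm p x • Z p) - x by
      simp only [smul_sub, Finset.sum_sub_distrib, sum_mm_smul]]
    abel
  rw [e1, add_dotProduct, sum_dotProduct, smul_dotProduct, smul_eq_mul]
  simp only [smul_dotProduct, smul_eq_mul]
  have e2 : bmp r s x * (w ⬝ᵥ y) ≤ mm r x * (c r - Z r ⬝ᵥ y) + mm s x * (c s - Z s ⬝ᵥ y) := by
    have h1 : bmp r s x ≤ mm r x := min_le_left _ _
    have h2 : bmp r s x ≤ mm s x := min_le_right _ _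
    have h3 := hZ r hr
    have h4 := hZ s hs
    have h0 := bmp_nonneg r s x
    nlinarith [mul_nonneg (sub_nonneg.2 h1) (sub_nonneg.2 h3),
      mul_nonneg (sub_nonneg.2 h2) (sub_nonneg.2 h4), mul_le_mul_of_nonneg_left hw h0]
  have e3 : mm r x * (c r - Z r ⬝ᵥ y) + mm s x * (c s - Z s ⬝ᵥ y)
      ≤ ∑ p, mm p x * (c p - Z p ⬝ᵥ y) := by
    rw [← Finset.sum_pair hrs (f := fun p => mm p x * (c p - Z p ⬝ᵥ y))]
    refine Finset.sum_le_sum_of_subset_of_nonneg (Finset.subset_univ _) fun p _ _ => ?_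
    by_cases hp : p = 0
    · subst hp; rw [mm_zero]; simp
    · exact mul_nonneg (mm_nonneg _ _) (sub_nonneg.2 (hZ p hp))
  have e4 : ∑ p, mm p x * (c p - Z p ⬝ᵥ y)
      = ∑ p, c p * mm p x - ∑ p, mm p x * (Z p ⬝ᵥ y) := by
    rw [← Finset.sum_sub_distrib]
    exact Finset.sum_congr rfl fun p _ => by ring
  linarith

lemma image_K {n : ℕ} {K : Set (Fin n → ℝ)} {δ : ℝ} (h : NormK K δ)
    {X Y : (Fin n → SignType) → Fin n → ℝ} (hS : Sel K δ X Y) (r s : Fin n → SignType)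
    (hr : r ≠ 0) (hs : s ≠ 0) (hrs : r ≠ s) (w : Fin n → ℝ)
    (hw : ∀ y ∈ pol K, w ⬝ᵥ y ≤ (1 - X r ⬝ᵥ y) + (1 - X s ⬝ᵥ y)) :
    ((fun x => x + ((∑ p, mm p x • (X p - vv p)) + bmp r s x • w)) '' Binf n) ⊆ K := by
  rintro _ ⟨x, hx, rfl⟩
  obtain ⟨i0, _⟩ := sp_nonempty hr
  apply bipolar h.conv h.closed (h.zero_mem i0)
  intro y hy
  refine (core_mem x y w (fun _ => 1) X r s hr hs hrs (fun p hp => hy _ (hS.mX p hp))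
    (hw y hy)).trans ?_
  simp only [one_mul, sum_mm_norm]
  rw [pi_norm_le_iff_of_nonneg zero_le_one]
  exact hx

lemma image_L {n : ℕ} {K : Set (Fin n → ℝ)} {δ : ℝ}
    {X Y : (Fin n → SignType) → Fin n → ℝ} (hS : Sel K δ X Y) (r s : Fin n → SignType)
    (hr : r ≠ 0) (hs : s ≠ 0) (hrs : r ≠ s) (w : Fin n → ℝ)
    (hw : ∀ x ∈ K, w ⬝ᵥ x ≤ (sp r).card * (1 - Y r ⬝ᵥ x) + (sp s).card * (1 - Y s ⬝ᵥ x)) :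
    ((fun x => x + ((∑ p, mm p x • (((sp p).card : ℝ) • Y p - vv p)) + bmp r s x • w)) '' Bone n)
      ⊆ pol K := by
  rintro _ ⟨y, hy, rfl⟩ x hx
  rw [dotProduct_comm]
  refine (core_mem y x w (fun p => ((sp p).card : ℝ)) (fun p => ((sp p).card : ℝ) • Y p)
    r s hr hs hrs (fun p hp => ?_) ?_).trans ?_
  · have := hS.mY p hp x hx
    rw [dotProduct_comm] at this
    rw [smul_dotProduct, smul_eq_mul]
    have h0 : (0:ℝ) ≤ (sp p).card := Nat.cast_nonneg _
    nlinarith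
  · refine (hw x hx).trans (le_of_eq ?_)
    simp only [smul_dotProduct, smul_eq_mul]
    ring
  · rw [sum_mm_card]; exact hy

lemma vv_dot_self {n : ℕ} (p : Fin n → SignType) : vv p ⬝ᵥ vv p = (sp p).card := by
  rw [sp, Finset.card_filter]
  push_cast
  refine Finset.sum_congr rfl fun i _ => ?_
  by_cases hi : p i = 0
  · simp [vv, hi]
  · simp only [vv]; rw [sign_mul_self' _ hi]; simp [hi]

lemma abs_dot_le {n : ℕ} (x y : Fin n → ℝ) : |x ⬝ᵥ y| ≤ n * (‖x‖ * ‖y‖) := by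
  unfold dotProduct
  refine (Finset.abs_sum_le_sum_abs _ _).trans ?_
  have : ∀ i ∈ Finset.univ, |x i * y i| ≤ ‖x‖ * ‖y‖ := fun i _ => by
    rw [abs_mul]
    exact mul_le_mul (norm_le_pi_norm x i) (norm_le_pi_norm y i) (abs_nonneg _) (norm_nonneg _)
  refine (Finset.sum_le_sum this).trans ?_
  simp

lemma first_order {n : ℕ} {K : Set (Fin n → ℝ)} {δ : ℝ} (hδ : 0 ≤ δ)
    {X Y : (Fin n → SignType) → Fin n → ℝ} (hS : Sel K δ X Y) (p : Fin n → SignType) :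
    - (n * (n * δ * δ)) ≤ th p * ((∑ i, (X p - vv p) i * vv p i) / (sp p).card)
      + th p * ((∑ i, (((sp p).card : ℝ) • Y p - vv p) i * vv p i) / (sp p).card) := by
  by_cases hp : p = 0
  · subst hp
    have : sp (0 : Fin n → SignType) = ∅ := by ext; simp [sp]
    rw [this]
    simp only [Finset.card_empty, Nat.cast_zero, _root_.div_zero, mul_zero, add_zero]
    have : 0 ≤ (n : ℝ) * (n * δ * δ) := by positivity
    linarith
  have hk0 : (0 : ℝ) < (sp p).card := by exact_mod_cast sp_card_pos hp
  set k : ℝ := ((sp p).card : ℝ) with hk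
  have hvv : vv p ⬝ᵥ vv p = k := vv_dot_self p
  have e1 : (∑ i, (X p - vv p) i * vv p i) = X p ⬝ᵥ vv p - k := by
    rw [← hvv, ← sub_dotProduct]; rfl
  have e2 : (∑ i, (k • Y p - vv p) i * vv p i) = k * (Y p ⬝ᵥ vv p) - k := by
    conv_rhs => rw [← hvv]
    rw [hvv, ← smul_eq_mul, ← smul_dotProduct, ← hvv, ← sub_dotProduct, hvv]; rfl
  have e3 : (X p - vv p) ⬝ᵥ (Y p - k⁻¹ • vv p)
      = 2 - k⁻¹ * (X p ⬝ᵥ vv p) - Y p ⬝ᵥ vv p := by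
    rw [sub_dotProduct, dotProduct_sub, dotProduct_sub, hS.dXY p hp, dotProduct_smul,
      dotProduct_smul, hvv, dotProduct_comm (vv p) (Y p), smul_eq_mul, smul_eq_mul,
      inv_mul_cancel₀ hk0.ne']
    ring
  have e4 := abs_dot_le (X p - vv p) (Y p - k⁻¹ • vv p)
  have e5 : ‖X p - vv p‖ * ‖Y p - k⁻¹ • vv p‖ ≤ n * δ * δ :=
    mul_le_mul (hS.nX p hp) (hS.nY p hp) (norm_nonneg _) (by positivity)
  have e6 : (X p - vv p) ⬝ᵥ (Y p - k⁻¹ • vv p) ≤ n * (n * δ * δ) :=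
    (le_abs_self _).trans (e4.trans (mul_le_mul_of_nonneg_left e5 (Nat.cast_nonneg _)))
  rw [e1, e2]
  have e7 : th p * ((X p ⬝ᵥ vv p - k) / k) + th p * ((k * (Y p ⬝ᵥ vv p) - k) / k)
      = - (th p * ((X p - vv p) ⬝ᵥ (Y p - k⁻¹ • vv p))) := by
    rw [e3]; field_simp; ring
  rw [e7]
  have h1 := th_nonneg p
  have h2 := th_le_one p
  have h3 : 0 ≤ (n : ℝ) * (n * δ * δ) := by positivity
  nlinarith

lemma term_bound {n : ℕ} {p : Fin n → SignType} (u : Fin n → ℝ) (ρ : ℝ) (hu : ‖u‖ ≤ ρ) :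
    |th p * ((∑ i, u i * vv p i) / (sp p).card)| ≤ n * ρ := by
  have hρ : 0 ≤ ρ := (norm_nonneg u).trans hu
  rw [abs_mul, abs_of_nonneg (th_nonneg p), abs_div, Nat.abs_cast]
  have h1 : |∑ i, u i * vv p i| ≤ n * ρ := by
    refine (abs_dot_le u (vv p)).trans ?_
    refine mul_le_mul_of_nonneg_left ?_ (Nat.cast_nonneg _)
    have := norm_vv_le p
    nlinarith [norm_nonneg (vv p), norm_nonneg u]
  have h2 : |∑ i, u i * vv p i| / (sp p).card ≤ |∑ i, u i * vv p i| := by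
    by_cases hp : p = 0
    · subst hp
      have : sp (0 : Fin n → SignType) = ∅ := by ext; simp [sp]
      rw [this]; simp
    · exact div_le_self (abs_nonneg _) (by exact_mod_cast sp_card_pos hp)
  have h3 := th_le_one p
  have h4 := th_nonneg p
  have h5 : 0 ≤ |∑ i, u i * vv p i| / (sp p).card := by positivity
  nlinarith

lemma num_aux (D E c : ℝ) (hD : 0 ≤ D) (hE : 0 ≤ E) (hc : 0 < c) : ∃ δ1 : ℝ, 0 < δ1 ∧
    ∀ δ A B : ℝ, 0 ≤ δ → δ ≤ δ1 → |A| ≤ D * δ → |B| ≤ D * δ → c * δ - E * δ ^ 2 ≤ A + B →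
      0 ≤ 1 + A ∧ 0 ≤ 1 + B ∧ 1 ≤ (1 + A) * (1 + B) := by
  refine ⟨min (c / (E + D ^ 2 + 1)) (1 / (D + 1)), by positivity, ?_⟩
  intro δ A B h0 h1 hA hB hAB
  have h2 : δ * (E + D ^ 2 + 1) ≤ c := by
    rw [← le_div_iff₀ (by positivity)]; exact h1.trans (min_le_left _ _)
  have h3 : δ * (D + 1) ≤ 1 := by
    rw [← le_div_iff₀ (by positivity)]; exact h1.trans (min_le_right _ _)
  have hA' := abs_le.1 hA
  have hB' := abs_le.1 hB
  refine ⟨by nlinarith, by nlinarith, ?_⟩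
  have h4 : |A * B| ≤ (D * δ) * (D * δ) := by
    rw [abs_mul]; exact mul_le_mul hA hB (abs_nonneg _) (by positivity)
  have h5 := (abs_le.1 h4).1
  nlinarith [mul_le_mul_of_nonneg_left h2 h0]

lemma real_Binf (n : ℕ) : volume.real (Binf n) = 2 ^ n := by
  rw [measureReal_def, vol_Binf]; simp

lemma real_Bone (n : ℕ) (hn : 2 ≤ n) : volume.real (Bone n) = 2 ^ n / n.factorial := by
  rw [measureReal_def, vol_Bone n hn, ENNReal.toReal_ofReal (by positivity)]

lemma target_eq (n : ℕ) (hn : 2 ≤ n) : ENNReal.ofReal (volume.real (Binf n) * volume.real (Bone n))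
    = (4 : ℝ≥0∞) ^ n / (n.factorial : ℝ≥0∞) := by
  rw [real_Binf, real_Bone n hn, mul_div_assoc', ← mul_pow,
    ENNReal.ofReal_div_of_pos (by positivity), ENNReal.ofReal_natCast,
    ENNReal.ofReal_pow (by norm_num)]
  norm_num

lemma one_side {n : ℕ} {B : Set (Fin n → ℝ)} (hB : SymSet B) (hV : 0 < volume.real B)
    {C ρ : ℝ} (hC : 0 ≤ C) (hρ : 0 ≤ ρ) (hρ1 : ρ ≤ 1)
    (U : (Fin n → SignType) → Fin n → ℝ) (hU : ∀ p, ‖U p‖ ≤ ρ) (r s : Fin n → SignType)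
    (w : Fin n → ℝ) (hw : ‖w‖ ≤ ρ) :
    |(∑ p, th p * ((∑ i, U p i * vv p i) / (sp p).card)) + GG B (bmp r s) w / volume.real B
      - C / volume.real B * ρ ^ 2|
      ≤ ((Fintype.card (Fin n → SignType) : ℝ) * n + 2 + C / volume.real B) * ρ := by
  have h1 : |∑ p, th p * ((∑ i, U p i * vv p i) / (sp p).card)|
      ≤ (Fintype.card (Fin n → SignType) : ℝ) * n * ρ := by
    refine (Finset.abs_sum_le_sum_abs _ _).trans ?_
    refine (Finset.sum_le_sum fun p _ => term_bound (U p) ρ (hU p)).trans ?_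
    rw [Finset.sum_const, nsmul_eq_mul, Finset.card_univ]; linarith
  have h2 : |GG B (bmp r s) w / volume.real B| ≤ 2 * ρ := by
    rw [abs_div, abs_of_pos hV, div_le_iff₀ hV]
    refine (GG_bound hB (bmp_lip r s) w).trans ?_
    nlinarith
  have h3 : |C / volume.real B * ρ ^ 2| ≤ C / volume.real B * ρ := by
    have : 0 ≤ C / volume.real B := by positivity
    rw [abs_of_nonneg (by positivity)]
    exact mul_le_mul_of_nonneg_left (by nlinarith : ρ ^ 2 ≤ ρ) this
  calc _ ≤ |(∑ p, th p * ((∑ i, U p i * vv p i) / (sp p).card)) + GG B (bmp r s) w / volume.real B|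
        + |C / volume.real B * ρ ^ 2| := abs_sub _ _
    _ ≤ |(∑ p, th p * ((∑ i, U p i * vv p i) / (sp p).card))| + |GG B (bmp r s) w / volume.real B|
        + |C / volume.real B * ρ ^ 2| := by gcongr; exact abs_add_le _ _
    _ ≤ _ := by linarith

lemma final_num (V V' C C' N m c E q : ℝ) (hV : 0 < V) (hV' : 0 < V') (hC : 0 ≤ C) (hC' : 0 ≤ C')
    (hN : 0 ≤ N) (hm : 0 ≤ m) (hc : 0 < c) (hE : 0 ≤ E) (hq : 0 < q) : ∃ δ1 : ℝ, 0 < δ1 ∧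
    ∀ δ α β g g' : ℝ, 0 ≤ δ → δ ≤ δ1 →
      |α + g / V - C / V * (δ * q) ^ 2| ≤ (N * m + 2 + C / V) * (δ * q) →
      |β + g' / V' - C' / V' * (δ * q) ^ 2| ≤ (N * m + 2 + C' / V') * (δ * q) →
      N * (- (m * (m * δ * δ))) ≤ α + β →
      c * δ - E * δ ^ 2 ≤ g / V + g' / V' →
      0 ≤ V + V * α + g - C * (δ * q) ^ 2 ∧
      V * V' ≤ (V + V * α + g - C * (δ * q) ^ 2) * (V' + V' * β + g' - C' * (δ * q) ^ 2) := by
  have hCV : 0 ≤ C / V := by positivity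
  have hCV' : 0 ≤ C' / V' := by positivity
  obtain ⟨δ1, hδ1, hnum⟩ := num_aux ((N * m + 2 + C / V + C' / V') * q)
    (E + N * (m * m) + C / V * q ^ 2 + C' / V' * q ^ 2) c (by positivity) (by positivity) hc
  refine ⟨δ1, hδ1, ?_⟩
  intro δ α β g g' h0 h1 a1 a2 fo gain
  have hdq : 0 ≤ δ * q := by positivity
  have f1 : V + V * α + g - C * (δ * q) ^ 2 = V * (1 + (α + g / V - C / V * (δ * q) ^ 2)) := by
    field_simp
    try ring
  have f2 : V' + V' * β + g' - C' * (δ * q) ^ 2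
      = V' * (1 + (β + g' / V' - C' / V' * (δ * q) ^ 2)) := by
    field_simp
    try ring
  have e1 : C / V * (δ * q) ^ 2 = C / V * q ^ 2 * δ ^ 2 := by ring
  have e2 : C' / V' * (δ * q) ^ 2 = C' / V' * q ^ 2 * δ ^ 2 := by ring
  obtain ⟨p1, p2, p3⟩ := hnum δ _ _ h0 h1
    (a1.trans (by nlinarith [mul_nonneg hCV' hdq])) (a2.trans (by nlinarith [mul_nonneg hCV hdq]))
    (by rw [e1, e2]; linarith)
  rw [f1, f2]
  refine ⟨by positivity, ?_⟩
  nlinarith [mul_pos hV hV', mul_le_mul_of_nonneg_left p3 (mul_pos hV hV').le]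

lemma vol_pair (n : ℕ) (hn : 2 ≤ n) (c E : ℝ) (hc : 0 < c) (hE : 0 ≤ E) : ∃ δ1 : ℝ, 0 < δ1 ∧
    ∀ (K : Set (Fin n → ℝ)) (δ : ℝ) (X Y : (Fin n → SignType) → Fin n → ℝ),
      NormK K δ → δ ≤ δ1 → Sel K δ X Y →
      ∀ (r s r' s' : Fin n → SignType) (w w' : Fin n → ℝ),
        r ≠ 0 → s ≠ 0 → r ≠ s → r' ≠ 0 → s' ≠ 0 → r' ≠ s' → ‖w‖ ≤ 6 * δ → ‖w'‖ ≤ 6 * δ →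
        (∀ y ∈ pol K, w ⬝ᵥ y ≤ (1 - X r ⬝ᵥ y) + (1 - X s ⬝ᵥ y)) →
        (∀ x ∈ K, w' ⬝ᵥ x ≤ (sp r').card * (1 - Y r' ⬝ᵥ x) + (sp s').card * (1 - Y s' ⬝ᵥ x)) →
        c * δ - E * δ ^ 2 ≤ GG (Binf n) (bmp r s) w / volume.real (Binf n)
          + GG (Bone n) (bmp r' s') w' / volume.real (Bone n) →
        (4 : ℝ≥0∞) ^ n / (n.factorial : ℝ≥0∞) ≤ volume K * volume (pol K) := by
  obtain ⟨C, ρ0, hC, hρ0, hvol⟩ := vol_lower2 (sym_Binf n)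
  obtain ⟨C', ρ0', hC', hρ0', hvol'⟩ := vol_lower2 (sym_Bone n)
  have hV : 0 < volume.real (Binf n) := by rw [real_Binf]; positivity
  have hV' : 0 < volume.real (Bone n) := by rw [real_Bone n hn]; positivity
  rw [← target_eq n hn]
  have hq0 : (0:ℝ) < (n:ℝ) + 6 := by positivity
  obtain ⟨δ1, hδ1, hnum⟩ := final_num (volume.real (Binf n)) (volume.real (Bone n)) C C'
    (Fintype.card (Fin n → SignType) : ℝ) n c E ((n:ℝ) + 6) hV hV' hC hC' (Nat.cast_nonneg _)
    (Nat.cast_nonneg _) hc hE hq0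
  refine ⟨min δ1 (min (1 / ((n:ℝ) + 6)) (min (ρ0 / ((n:ℝ) + 6)) (ρ0' / ((n:ℝ) + 6)))),
    by positivity, ?_⟩
  intro K δ X Y hK hδ hS r s r' s' w w' hr hs hrs hr' hs' hrs' hw hw' hm hm' hgain
  have hδ0 := hK.nonneg
  have b1 : δ ≤ δ1 := hδ.trans (min_le_left _ _)
  have b2 : δ * ((n:ℝ) + 6) ≤ 1 := by
    rw [← le_div_iff₀ hq0]; exact hδ.trans ((min_le_right _ _).trans (min_le_left _ _))
  have b3 : δ * ((n:ℝ) + 6) ≤ ρ0 := by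
    rw [← le_div_iff₀ hq0]
    exact hδ.trans ((min_le_right _ _).trans ((min_le_right _ _).trans (min_le_left _ _)))
  have b4 : δ * ((n:ℝ) + 6) ≤ ρ0' := by
    rw [← le_div_iff₀ hq0]
    exact hδ.trans ((min_le_right _ _).trans ((min_le_right _ _).trans (min_le_right _ _)))
  have hnd : 0 ≤ (n:ℝ) * δ := by positivity
  have hnum' := fun α β g g' => hnum δ α β g g' hδ0 b1
  obtain ⟨ρ, hρ⟩ : ∃ ρ, ρ = δ * ((n:ℝ) + 6) := ⟨_, rfl⟩
  rw [← hρ] at b2 b3 b4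
  simp only [← hρ] at hnum'
  have hρ0 : 0 ≤ ρ := by rw [hρ]; positivity
  have hnρ : n * δ ≤ ρ := by rw [hρ]; linarith
  have h6ρ : 6 * δ ≤ ρ := by rw [hρ]; linarith
  have hv0 : vv (0 : Fin n → SignType) = 0 := by ext i; simp [vv]
  have hU : ∀ p, ‖X p - vv p‖ ≤ ρ := by
    intro p
    by_cases hp : p = 0
    · subst hp; rw [hS.zX, hv0]; simpa using hρ0
    · exact (hS.nX p hp).trans hnρ
  have hU' : ∀ p, ‖((sp p).card : ℝ) • Y p - vv p‖ ≤ ρ := by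
    intro p
    by_cases hp : p = 0
    · subst hp; rw [hS.zY, hv0]; simpa using hρ0
    · have hk0 : (0 : ℝ) < (sp p).card := by exact_mod_cast sp_card_pos hp
      have hkn : ((sp p).card : ℝ) ≤ n := by
        exact_mod_cast (by simpa using Finset.card_le_univ (sp p))
      have e : ((sp p).card : ℝ) • Y p - vv p
          = ((sp p).card : ℝ) • (Y p - ((sp p).card : ℝ)⁻¹ • vv p) := by
        rw [smul_sub, smul_smul, mul_inv_cancel₀ hk0.ne', one_smul]
      rw [e, norm_smul, Real.norm_of_nonneg hk0.le]
      refine le_trans ?_ hnρ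
      exact mul_le_mul hkn (hS.nY p hp) (norm_nonneg _) (Nat.cast_nonneg _)
  have k1 := (hvol (fun p => X p - vv p) r s w ρ hρ0 b3 hU (hw.trans h6ρ)).trans
    (measure_mono (image_K hK hS r s hr hs hrs w hm))
  have k2 := (hvol' (fun p => ((sp p).card : ℝ) • Y p - vv p) r' s' w' ρ hρ0 b4 hU'
    (hw'.trans h6ρ)).trans (measure_mono (image_L hS r' s' hr' hs' hrs' w' hm'))
  have a1 := one_side (sym_Binf n) hV hC hρ0 b2 (fun p => X p - vv p) hU r s w (hw.trans h6ρ)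
  have a2 := one_side (sym_Bone n) hV' hC' hρ0 b2 (fun p => ((sp p).card : ℝ) • Y p - vv p) hU'
    r' s' w' (hw'.trans h6ρ)
  have fo := Finset.sum_le_sum fun (p : Fin n → SignType) (_ : p ∈ Finset.univ) =>
    first_order hδ0 hS p
  rw [Finset.sum_const, Finset.sum_add_distrib, nsmul_eq_mul, Finset.card_univ] at fo
  obtain ⟨p1, p2⟩ := hnum' _ _ _ _ a1 a2 fo hgain
  refine le_trans ?_ (mul_le_mul' k1 k2)
  rw [← ENNReal.ofReal_mul p1]
  exact ENNReal.ofReal_le_ofReal p2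

lemma exists_dir {n : ℕ} (hn : 2 ≤ n) {K : Set (Fin n → ℝ)} {δ : ℝ} (h : NormK K δ) (hδ : δ < 1)
    {X Y : (Fin n → SignType) → Fin n → ℝ} (hS : Sel K δ X Y)
    (ξ : Fin n → ℝ) (hξ : ξ ∈ pol K) (hs : ∑ i, |ξ i| = 1 + δ) :
    ∃ v : Fin n → SignType, (∀ i, v i ≠ 0) ∧ ∃ i, (v i : ℝ) * X v i ≤ 1 - δ / 2 := by
  set v : Fin n → SignType := fun i => if ξ i < 0 then -1 else 1 with hv
  have hv0 : ∀ i, v i ≠ 0 := by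
    intro i; simp only [hv]; split_ifs <;> decide
  have i0 : Fin n := ⟨0, by omega⟩
  have hvne : v ≠ 0 := fun h0 => hv0 i0 (congrFun h0 i0)
  refine ⟨v, hv0, ?_⟩
  by_contra hcon
  push Not at hcon
  have hδ0 := h.nonneg
  have h1 : X v ⬝ᵥ ξ ≤ 1 := hξ _ (hS.mX v hvne)
  have e : X v ⬝ᵥ ξ = ∑ i, |ξ i| * ((v i : ℝ) * X v i) := by
    refine Finset.sum_congr rfl fun i _ => ?_
    by_cases hi : ξ i < 0
    · have : v i = -1 := by simp [hv, hi]
      rw [this, abs_of_neg hi]; simp; ring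
    · have : v i = 1 := by simp [hv, hi]
      rw [this, abs_of_nonneg (not_lt.1 hi)]; simp; ring
  have h2 : ∑ i, |ξ i| * (1 - δ / 2) ≤ X v ⬝ᵥ ξ := by
    rw [e]
    exact Finset.sum_le_sum fun i _ => mul_le_mul_of_nonneg_left (hcon i).le (abs_nonneg _)
  rw [← Finset.sum_mul, hs] at h2
  have h3 : (v i0 : ℝ) * X v i0 ≤ 1 := by
    refine (le_abs_self _).trans ?_
    rw [abs_mul, abs_sign_eq _ (hv0 i0), one_mul]
    exact h.sub _ (hS.mX v hvne) i0
  have h4 := hcon i0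
  have h5 : 0 < δ := by linarith
  nlinarith

/-- Case B: a near-tight functional gives a profitable direction in the polar. -/
lemma exists_xi {n : ℕ} {K : Set (Fin n → ℝ)} {δ c : ℝ} (h : NormK K δ) (hδ : δ ≤ 1)
    (hc8 : c ≤ 1 / 8)
    (x ξ : Fin n → ℝ) (hx : x ∈ K) (hξ : ξ ∈ pol K) (i : Fin n) (σ : SignType) (hσ : σ ≠ 0)
    (hxi : (σ : ℝ) * x i ≤ 1 - δ / 2) (hA : 1 - 2 * c * δ ≤ (σ : ℝ) * ξ i)
    (hB : 1 - 2 * c * δ ≤ x ⬝ᵥ ξ) (hδ0 : 0 < δ) :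
    (∀ j, j ≠ i → |ξ j| ≤ 2 * δ) ∧ ∃ j, j ≠ i ∧ δ / (4 * n) ≤ |ξ j| := by
  have hsum : |ξ i| + ∑ j ∈ Finset.univ.erase i, |ξ j| = ∑ j, |ξ j| :=
    Finset.add_sum_erase _ (fun j => |ξ j|) (Finset.mem_univ i)
  have hbd := h.bd ξ hξ
  have hσξ : (σ : ℝ) * ξ i ≤ |ξ i| := by
    refine (le_abs_self _).trans ?_
    rw [abs_mul, abs_sign_eq _ hσ, one_mul]
  have hcd : c * δ ≤ 1 / 8 * δ := mul_le_mul_of_nonneg_right hc8 hδ0.le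
  constructor
  · intro j hj
    have : |ξ j| ≤ ∑ j ∈ Finset.univ.erase i, |ξ j| :=
      Finset.single_le_sum (f := fun j => |ξ j|) (fun _ _ => abs_nonneg _)
        (Finset.mem_erase.2 ⟨hj, Finset.mem_univ j⟩)
    linarith
  · by_contra hcon
    push Not at hcon
    have hdot : x i * ξ i + ∑ j ∈ Finset.univ.erase i, x j * ξ j = x ⬝ᵥ ξ :=
      Finset.add_sum_erase _ (fun j => x j * ξ j) (Finset.mem_univ i)
    have h1 : ∑ j ∈ Finset.univ.erase i, x j * ξ j ≤ ∑ j ∈ Finset.univ.erase i, |ξ j| := by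
      refine Finset.sum_le_sum fun j _ => ?_
      refine (le_abs_self _).trans ?_
      rw [abs_mul]
      exact mul_le_of_le_one_left (abs_nonneg _) (h.sub x hx j)
    have hn0 : 0 < (n : ℝ) := by
      have := i.pos; exact_mod_cast this
    have h2 : ∑ j ∈ Finset.univ.erase i, |ξ j| ≤ (n - 1) * (δ / (4 * n)) := by
      refine (Finset.sum_le_card_nsmul _ _ (δ / (4 * n))
        fun j hj => (hcon j (Finset.mem_erase.1 hj).1).le).trans ?_
      rw [Finset.card_erase_of_mem (Finset.mem_univ i), Finset.card_univ, Fintype.card_fin,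
        nsmul_eq_mul, Nat.cast_sub (by have := i.pos; omega)]
      simp
    have h3 : ((n:ℝ) - 1) * (δ / (4 * n)) < δ / 4 := by
      have : (n:ℝ) * (δ / (4 * n)) = δ / 4 := by field_simp
      have : 0 < δ / (4 * n) := by positivity
      linarith
    have h4 : x i * ξ i = ((σ:ℝ) * x i) * ((σ:ℝ) * ξ i) := by
      have := sign_mul_self' _ hσ
      linear_combination (-(x i * ξ i)) * this
    have h5 : (σ:ℝ) * ξ i ≤ 1 := hσξ.trans (h.pol_abs ξ hξ i)
    have h6 : 0 ≤ (σ:ℝ) * ξ i := by linarith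
    have h7 : x i * ξ i ≤ 1 - δ / 2 := by
      rw [h4]
      nlinarith [mul_le_mul_of_nonneg_right hxi h6]
    linarith

lemma gain_one {n : ℕ} {K : Set (Fin n → ℝ)} {δ c κ : ℝ} (h : NormK K δ) (hδ : δ ≤ 1)
    {X Y : (Fin n → SignType) → Fin n → ℝ} (hS : Sel K δ X Y)
    (ξ : Fin n → ℝ) (hξ : ξ ∈ pol K) (i j : Fin n) (hij : j ≠ i) (σ τ : SignType)
    (hσ : σ ≠ 0) (hτ : τ ≠ 0) (q : Fin n → SignType)
    (hq : q = Function.update (Pi.single i σ) j τ)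
    (hc0 : 0 ≤ c) (hc8 : c ≤ 1 / 8)
    (hcW : 2 * c * (2 * volume.real (Bone n)) ≤ κ / (16 * n)) (hκ0 : 0 < κ)
    (hκ : κ ≤ GG (Bone n) (bmp q (Pi.single i σ)) (vv q))
    (hA : 1 - 2 * c * δ ≤ (σ : ℝ) * ξ i) (hτj : (τ : ℝ) * |ξ j| = ξ j)
    (hup : ∀ k, k ≠ i → |ξ k| ≤ 2 * δ) (hlo : δ / (4 * n) ≤ |ξ j|) :
    ‖(ξ - vv (Pi.single i σ)) - |ξ j| • (Y q - vv (Pi.single i σ))‖ ≤ 6 * δ ∧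
    κ / (16 * n) * δ - 4 * (2 * volume.real (Bone n)) * δ ^ 2 ≤
      GG (Bone n) (bmp q (Pi.single i σ))
        ((ξ - vv (Pi.single i σ)) - |ξ j| • (Y q - vv (Pi.single i σ))) := by
  have hδ0 := h.nonneg
  have hn0 : 0 < (n : ℝ) := by
    have := i.pos; exact_mod_cast this
  have hqi : q i = σ := by rw [hq, Function.update_of_ne hij.symm]; simp
  have hqj : q j = τ := by rw [hq]; simp
  have hq0 : q ≠ 0 := fun h0 => hσ (by rw [← hqi, h0]; rfl)
  have hspq : sp q = {i, j} := by
    ext k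
    by_cases hk : k = j
    · subst hk; simp [sp, hqj, hτ]
    · by_cases hki : k = i
      · subst hki; simp [sp, hqi, hσ]
      · simp [sp, hq, hk, hki]
  have hcard : ((sp q).card : ℝ) = 2 := by rw [hspq, Finset.card_pair hij.symm]; norm_num
  have hσσ := sign_mul_self' _ hσ
  have hYabs : ∀ k, |Y q k| ≤ 1 := fun k => h.pol_abs _ (hS.mY q hq0) k
  have hnY := hS.nY q hq0
  rw [hcard] at hnY
  have hYi : |Y q i - (σ:ℝ) / 2| ≤ δ := by
    have e : Y q i - (σ:ℝ) / 2 = (Y q - (2:ℝ)⁻¹ • vv q) i := by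
      simp only [Pi.sub_apply, Pi.smul_apply, smul_eq_mul, vv, hqi]; ring
    rw [e]
    exact (norm_le_pi_norm (Y q - (2:ℝ)⁻¹ • vv q) i).trans hnY
  have hYj : |Y q j - (τ:ℝ) / 2| ≤ δ := by
    have e : Y q j - (τ:ℝ) / 2 = (Y q - (2:ℝ)⁻¹ • vv q) j := by
      simp only [Pi.sub_apply, Pi.smul_apply, smul_eq_mul, vv, hqj]; ring
    rw [e]
    exact (norm_le_pi_norm (Y q - (2:ℝ)⁻¹ • vv q) j).trans hnY
  set η := |ξ j| with hη
  have hη0 : 0 ≤ η := abs_nonneg _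
  have hη2 : η ≤ 2 * δ := hup j hij
  have hcd : c * δ ≤ 1 / 8 * δ := mul_le_mul_of_nonneg_right hc8 hδ0
  have hξi : |ξ i - (σ:ℝ)| ≤ 2 * c * δ := by
    have e : ξ i - (σ:ℝ) = (σ:ℝ) * ((σ:ℝ) * ξ i - 1) := by linear_combination (-(ξ i)) * hσσ
    rw [e, abs_mul, abs_sign_eq _ hσ, one_mul]
    have : (σ:ℝ) * ξ i ≤ 1 := by
      refine (le_abs_self _).trans ?_
      rw [abs_mul, abs_sign_eq _ hσ, one_mul]; exact h.pol_abs ξ hξ i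
    rw [abs_of_nonpos (by linarith)]; linarith
  have hvi : vv (Pi.single i σ : Fin n → SignType) i = σ := by rw [vv_single]; simp
  have hvk : ∀ k, k ≠ i → vv (Pi.single i σ : Fin n → SignType) k = 0 := by
    intro k hk; rw [vv_single]; simp [hk]
  set w := (ξ - vv (Pi.single i σ)) - η • (Y q - vv (Pi.single i σ)) with hw
  have hwi : w i = η / 2 * σ + ((ξ i - σ) - η * (Y q i - (σ:ℝ) / 2)) := by
    simp only [hw, Pi.sub_apply, Pi.smul_apply, smul_eq_mul, hvi]; ring
  have hwj : w j = η / 2 * τ + (- (η * (Y q j - (τ:ℝ) / 2))) := by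
    simp only [hw, Pi.sub_apply, Pi.smul_apply, smul_eq_mul, hvk j hij]
    rw [← hτj]; ring
  constructor
  · rw [pi_norm_le_iff_of_nonneg (by linarith)]
    intro k
    rw [Real.norm_eq_abs]
    have h1 : |ξ k - vv (Pi.single i σ) k| ≤ 2 * δ := by
      by_cases hk : k = i
      · subst hk; rw [hvi]; linarith
      · rw [hvk k hk, sub_zero]; exact hup k hk
    have h2 : |Y q k - vv (Pi.single i σ) k| ≤ 2 := by
      refine (abs_sub _ _).trans ?_
      have : |vv (Pi.single i σ : Fin n → SignType) k| ≤ 1 := abs_sign_le _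
      have := hYabs k
      linarith
    calc |w k| = |(ξ k - vv (Pi.single i σ) k) - η * (Y q k - vv (Pi.single i σ) k)| := rfl
      _ ≤ |ξ k - vv (Pi.single i σ) k| + |η * (Y q k - vv (Pi.single i σ) k)| := abs_sub _ _
      _ ≤ 2 * δ + η * 2 := by
        rw [abs_mul, abs_of_nonneg hη0]
        exact add_le_add h1 (mul_le_mul_of_nonneg_left h2 hη0)
      _ ≤ 6 * δ := by linarith
  · have hB := sym_Bone n
    have hf : LipschitzWith 2 (bmp q (Pi.single i σ)) := bmp_lip _ _
    set Gi := GG (Bone n) (bmp q (Pi.single i σ)) (Pi.single i 1) with hGi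
    set Gj := GG (Bone n) (bmp q (Pi.single i σ)) (Pi.single j 1) with hGj
    have hexp : ∀ u : Fin n → ℝ, GG (Bone n) (bmp q (Pi.single i σ)) u = u i * Gi + u j * Gj := by
      intro u
      rw [GG_sum hB hf u, ← Finset.sum_pair hij.symm
        (f := fun k => u k * GG (Bone n) (bmp q (Pi.single i σ)) (Pi.single k 1))]
      symm
      apply Finset.sum_subset (Finset.subset_univ _)
      intro k _ hk
      simp only [Finset.mem_insert, Finset.mem_singleton, not_or] at hk
      rw [GG_bmp_zero hB _ _ k (by rw [hq]; simp [hk.1, hk.2]) (by simp [hk.1]), mul_zero]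
    have hns : ∀ k : Fin n, ‖(Pi.single k (1:ℝ) : Fin n → ℝ)‖ ≤ 1 := by
      intro k; rw [Pi.norm_single]; simp
    set W := 2 * volume.real (Bone n) with hW
    have hW0 : 0 ≤ W := by positivity
    have hGi' : |Gi| ≤ W := (GG_bound hB hf _).trans (by
      exact mul_le_of_le_one_right hW0 (hns i))
    have hGj' : |Gj| ≤ W := (GG_bound hB hf _).trans (by
      exact mul_le_of_le_one_right hW0 (hns j))
    rw [hexp] at hκ ⊢
    rw [hwi, hwj]
    have hvq : vv q i = σ ∧ vv q j = τ := ⟨by simp [vv, hqi], by simp [vv, hqj]⟩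
    rw [hvq.1, hvq.2] at hκ
    have b1 : |((ξ i - σ) - η * (Y q i - (σ:ℝ) / 2)) * Gi| ≤ (2 * c * δ + 2 * δ * δ) * W := by
      rw [abs_mul]
      refine mul_le_mul ?_ hGi' (abs_nonneg _) (by positivity)
      refine (abs_sub _ _).trans ?_
      rw [abs_mul, abs_of_nonneg hη0]
      exact add_le_add hξi (mul_le_mul hη2 hYi (abs_nonneg _) (by positivity))
    have b2 : |(- (η * (Y q j - (τ:ℝ) / 2))) * Gj| ≤ (2 * δ * δ) * W := by
      rw [abs_mul, abs_neg, abs_mul, abs_of_nonneg hη0]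
      exact mul_le_mul (mul_le_mul hη2 hYj (abs_nonneg _) (by positivity)) hGj' (abs_nonneg _)
        (by positivity)
    have b1' := (abs_le.1 b1).1
    have b2' := (abs_le.1 b2).1
    have m1 : δ / (4 * n) / 2 * κ ≤ η / 2 * ((σ:ℝ) * Gi + (τ:ℝ) * Gj) :=
      mul_le_mul (by linarith) hκ hκ0.le (by linarith)
    have e1 : δ / (4 * n) / 2 * κ = 2 * (κ / (16 * n) * δ) := by field_simp; ring
    have m2 : 2 * c * W * δ ≤ κ / (16 * n) * δ := mul_le_mul_of_nonneg_right hcW hδ0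
    nlinarith

lemma core_ineq (n : ℕ) (hn : 2 ≤ n) : ∃ δ0 : ℝ, 0 < δ0 ∧
    ∀ (K : Set (Fin n → ℝ)) (δ : ℝ), δ ≤ δ0 → NormK K δ →
      (∃ ξ ∈ pol K, ∑ i, |ξ i| = 1 + δ) →
      (4 : ℝ≥0∞) ^ n / (n.factorial : ℝ≥0∞) ≤ volume K * volume (pol K) := by
  obtain ⟨κ, hκ0, hκ⟩ := exists_kappa (Binf n)
  obtain ⟨κ', hκ0', hκ'⟩ := exists_kappa (Bone n)
  have hV : 0 < volume.real (Binf n) := by rw [real_Binf]; positivity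
  have hV' : 0 < volume.real (Bone n) := by rw [real_Bone n hn]; positivity
  have hn0 : 0 < (n : ℝ) := by exact_mod_cast (by omega : 0 < n)
  obtain ⟨c, hcd⟩ : ∃ c : ℝ, c = min (1 / 8) (κ' / (64 * n * volume.real (Bone n))) := ⟨_, rfl⟩
  have hc0 : 0 < c := by rw [hcd]; positivity
  have hc8 : c ≤ 1 / 8 := by rw [hcd]; exact min_le_left _ _
  have hcW : 2 * c * (2 * volume.real (Bone n)) ≤ κ' / (16 * n) := by
    have h1 : c ≤ κ' / (64 * n * volume.real (Bone n)) := by rw [hcd]; exact min_le_right _ _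
    rw [le_div_iff₀ (by positivity)] at h1 ⊢
    nlinarith
  obtain ⟨b, hbd⟩ : ∃ b : ℝ, b = min (2 * c * κ / volume.real (Binf n))
    (κ' / (16 * n) / volume.real (Bone n)) := ⟨_, rfl⟩
  have hb0 : 0 < b := by rw [hbd]; positivity
  obtain ⟨δ1, hδ1, hvp⟩ := vol_pair n hn b 8 hb0 (by norm_num)
  refine ⟨min δ1 (1 / 2), by positivity, ?_⟩
  rintro K δ hδ hK ⟨ξ0, hξ0, hξs⟩
  have hδ' : δ ≤ δ1 := hδ.trans (min_le_left _ _)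
  have hδh : δ ≤ 1 / 2 := hδ.trans (min_le_right _ _)
  have hδ0 := hK.nonneg
  obtain ⟨X, Y, hS⟩ := sel_all hK
  obtain ⟨v, hv, i, hvi⟩ := exists_dir hn hK (by linarith) hS ξ0 hξ0 hξs
  have hvne : v ≠ 0 := fun h0 => hv i (congrFun h0 i)
  obtain ⟨a, ha⟩ : ∃ a : Fin n → SignType, a = Pi.single i (v i) := ⟨_, rfl⟩
  have hane : a ≠ 0 := fun h0 => hv i (by simpa [ha] using congrFun h0 i)
  obtain ⟨k, hk⟩ : ∃ k : Fin n, k ≠ i := by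
    have : Nontrivial (Fin n) := Fin.nontrivial_iff_two_le.2 hn
    exact exists_ne i
  have hav : a ≠ v := fun h0 => hv k (by rw [← h0, ha]; simp [hk])
  have hXa : X a = vv a := by rw [ha]; exact hS.sX i _ (hv i)
  have hYa : Y a = vv a := by rw [ha]; exact hS.sY i _ (hv i)
  have hnonnegX : ∀ y ∈ pol K, 0 ≤ (1 - X a ⬝ᵥ y) + (1 - X v ⬝ᵥ y) := by
    intro y hy
    have h1 := hy _ (hS.mX a hane)
    have h2 := hy _ (hS.mX v hvne)
    linarith
  have hYle : ∀ p, p ≠ 0 → ∀ x ∈ K, Y p ⬝ᵥ x ≤ 1 := by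
    intro p hp x hx
    rw [dotProduct_comm]; exact hS.mY p hp x hx
  by_cases hcase : ∀ y ∈ pol K, ((2 * c * δ) • vv a) ⬝ᵥ y ≤ (1 - X a ⬝ᵥ y) + (1 - X v ⬝ᵥ y)
  · refine hvp K δ X Y hK hδ' hS a v a v ((2 * c * δ) • vv a) 0 hane hvne hav hane hvne hav ?_ ?_
      hcase ?_ ?_
    · rw [norm_smul, Real.norm_of_nonneg (by positivity)]
      have h1 := norm_vv_le a
      have h2 : c * δ ≤ 1 / 8 * δ := mul_le_mul_of_nonneg_right hc8 hδ0
      have h3 : 0 ≤ 2 * c * δ := by positivity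
      nlinarith [norm_nonneg (vv a)]
    · simpa using hδ0
    · intro x hx
      rw [zero_dotProduct]
      have h1 := hYle a hane x hx
      have h2 := hYle v hvne x hx
      have h3 : (0:ℝ) ≤ (sp a).card := Nat.cast_nonneg _
      have h4 : (0:ℝ) ≤ (sp v).card := Nat.cast_nonneg _
      nlinarith
    · have hz : GG (Bone n) (bmp a v) 0 = 0 := by
        have := GG_smul (B := Bone n) (f := bmp a v) 0 0
        simpa using this
      rw [hz, GG_smul]
      have h1 : κ ≤ GG (Binf n) (bmp a v) (vv a) := by
        apply hκ; rw [ha]; exact bump_inf hn v hv i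
      have h2 : b ≤ 2 * c * κ / volume.real (Binf n) := by rw [hbd]; exact min_le_left _ _
      have h3 : 2 * c * δ * κ / volume.real (Binf n)
          ≤ 2 * c * δ * GG (Binf n) (bmp a v) (vv a) / volume.real (Binf n) := by gcongr
      have h4 : 2 * c * δ * κ / volume.real (Binf n) = 2 * c * κ / volume.real (Binf n) * δ := by
        ring
      have h5 := mul_le_mul_of_nonneg_right h2 hδ0
      rw [_root_.zero_div, add_zero]
      nlinarith [sq_nonneg δ]
  · push Not at hcase
    obtain ⟨ξ, hξ, hlt⟩ := hcase
    have hA1 := hξ _ (hS.mX a hane)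
    have hB1 := hξ _ (hS.mX v hvne)
    rw [hXa, smul_dotProduct, smul_eq_mul] at hlt
    rw [hXa] at hA1
    have eA : vv a ⬝ᵥ ξ = (v i : ℝ) * ξ i := by rw [ha, vv_single, single_dotProduct]
    rw [eA] at hA1 hlt
    have hcδ : 0 ≤ 2 * c * δ := by positivity
    have hδpos : 0 < δ := by
      rcases hδ0.lt_or_eq with h | h
      · exact h
      · rw [← h] at hlt; simp at hlt; linarith
    have hle : 2 * c * δ * ((v i : ℝ) * ξ i) ≤ 2 * c * δ := by nlinarith
    have hA : 1 - 2 * c * δ ≤ (v i : ℝ) * ξ i := by linarith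
    have hB : 1 - 2 * c * δ ≤ X v ⬝ᵥ ξ := by linarith
    obtain ⟨hup, j, hji, hlo⟩ := exists_xi hK (by linarith) hc8 (X v) ξ (hS.mX v hvne) hξ i (v i)
      (hv i) hvi hA hB hδpos
    have hξj : 0 < |ξ j| := lt_of_lt_of_le (by positivity) hlo
    obtain ⟨τ, hτ, hτj⟩ : ∃ τ : SignType, τ ≠ 0 ∧ (τ : ℝ) * |ξ j| = ξ j := by
      rcases lt_trichotomy (ξ j) 0 with h | h | h
      · exact ⟨-1, by decide, by rw [abs_of_neg h]; simp⟩
      · rw [h] at hξj; simp at hξj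
      · exact ⟨1, by decide, by rw [abs_of_pos h]; simp⟩
    obtain ⟨q, hq⟩ : ∃ q : Fin n → SignType, q = Function.update (Pi.single i (v i)) j τ :=
      ⟨_, rfl⟩
    have hqj : q j = τ := by rw [hq]; simp
    have hqi : q i = v i := by rw [hq, Function.update_of_ne hji.symm]; simp
    have hqne : q ≠ 0 := fun h0 => hτ (by rw [← hqj, h0]; rfl)
    have hqa : q ≠ a := fun h0 => hτ (by rw [← hqj, h0, ha]; simp [hji])
    obtain ⟨g1, g2⟩ := gain_one hK (by linarith) hS ξ hξ i j hji (v i) τ (hv i) hτ q hq hc0.le hc8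
      hcW hκ0' (by apply hκ'; rw [hq]; exact bump_one i j hji (v i) τ (hv i) hτ) hA hτj hup hlo
    rw [← ha] at g1 g2
    refine hvp K δ X Y hK hδ' hS a v q a 0 _ hane hvne hav hqne hane hqa
      (by simpa using hδ0) g1 (fun y hy => by rw [zero_dotProduct]; exact hnonnegX y hy) ?_ ?_
    · intro x hx
      have c1 : ((sp a).card : ℝ) = 1 := by rw [ha, sp_single i _ (hv i)]; simp
      have c2 : (1 : ℝ) ≤ (sp q).card := by exact_mod_cast sp_card_pos hqne
      have h1 := hYle a hane x hx
      have h2 := hYle q hqne x hx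
      have h3 : ξ ⬝ᵥ x ≤ 1 := by rw [dotProduct_comm]; exact hξ x hx
      rw [hYa] at h1 ⊢
      rw [c1, sub_dotProduct, sub_dotProduct, smul_dotProduct, sub_dotProduct, smul_eq_mul]
      have hη1 : |ξ j| ≤ 1 := hK.pol_abs ξ hξ j
      have t1 : 0 ≤ |ξ j| * (1 - vv a ⬝ᵥ x) := mul_nonneg hξj.le (by linarith)
      have t2 : |ξ j| * (1 - Y q ⬝ᵥ x) ≤ (sp q).card * (1 - Y q ⬝ᵥ x) :=
        mul_le_mul_of_nonneg_right (by linarith) (by linarith)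
      nlinarith
    · have hz : GG (Binf n) (bmp a v) 0 = 0 := by
        have := GG_smul (B := Binf n) (f := bmp a v) 0 0
        simpa using this
      rw [hz, _root_.zero_div, zero_add]
      have h2 : b ≤ κ' / (16 * n) / volume.real (Bone n) := by rw [hbd]; exact min_le_right _ _
      rw [le_div_iff₀ hV'] at h2 ⊢
      refine le_trans ?_ g2
      have h5 := mul_le_mul_of_nonneg_right h2 hδ0
      nlinarith

lemma perm_close {n : ℕ} (hn : 2 ≤ n) (A : Matrix (Fin n) (Fin n) ℝ) (t : ℝ) (ht : 0 < t)
    (hrow : ∀ i, ∑ k, |A i k| ≤ 1) (hdet : t ≤ |A.det|) :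
    ∃ σ : Equiv.Perm (Fin n), ∀ i,
      t - 2 * n * ((1 - t) * n.factorial / t)
        ≤ |A i (σ i)| - ∑ k ∈ Finset.univ.erase (σ i), |A i k| := by
  classical
  have hfac : (0:ℝ) < n.factorial := by exact_mod_cast n.factorial_pos
  have hperm : t ≤ ∑ σ : Equiv.Perm (Fin n), ∏ i, |A i (σ i)| := by
    refine hdet.trans ?_
    rw [← Matrix.det_transpose, Matrix.det_apply]
    refine (Finset.abs_sum_le_sum_abs _ _).trans (Finset.sum_le_sum fun σ _ => ?_)
    rw [Units.smul_def, zsmul_eq_mul, abs_mul, Finset.abs_prod]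
    have : |(((Equiv.Perm.sign σ : ℤˣ) : ℤ) : ℝ)| = 1 := by
      rcases Int.units_eq_one_or (Equiv.Perm.sign σ) with h | h <;> simp [h]
    rw [this, one_mul]
    rfl
  have hall : ∏ i, ∑ k, |A i k| = ∑ f : Fin n → Fin n, ∏ i, |A i (f i)| := by
    rw [Finset.prod_univ_sum, Fintype.piFinset_univ]
  have hprod1 : ∏ i, ∑ k, |A i k| ≤ 1 :=
    Finset.prod_le_one (fun i _ => Finset.sum_nonneg fun _ _ => abs_nonneg _) fun i _ => hrow i
  have hemb : ∑ σ : Equiv.Perm (Fin n), ∏ i, |A i (σ i)|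
      = ∑ f ∈ Finset.univ.image (fun σ : Equiv.Perm (Fin n) => (σ : Fin n → Fin n)),
        ∏ i, |A i (f i)| := by
    rw [Finset.sum_image (fun a _ b _ h => DFunLike.coe_injective h)]
  have htall : t ≤ ∏ i, ∑ k, |A i k| := by
    rw [hall]
    refine hperm.trans ?_
    rw [hemb]
    exact Finset.sum_le_sum_of_subset_of_nonneg (Finset.subset_univ _)
      fun f _ _ => Finset.prod_nonneg fun _ _ => abs_nonneg _
  obtain ⟨σ, hσ⟩ : ∃ σ : Equiv.Perm (Fin n), t / n.factorial ≤ ∏ i, |A i (σ i)| := by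
    by_contra hcon
    push Not at hcon
    have h1 : ∑ σ : Equiv.Perm (Fin n), ∏ i, |A i (σ i)|
        < ∑ σ : Equiv.Perm (Fin n), t / n.factorial :=
      Finset.sum_lt_sum_of_nonempty Finset.univ_nonempty fun σ _ => hcon σ
    rw [Finset.sum_const, Finset.card_univ, Fintype.card_perm, Fintype.card_fin, nsmul_eq_mul,
      mul_div_cancel₀ _ hfac.ne'] at h1
    linarith
  refine ⟨σ, fun i => ?_⟩
  have hle1 : ∀ i k, |A i k| ≤ 1 := fun i k =>
    (Finset.single_le_sum (f := fun k => |A i k|) (fun _ _ => abs_nonneg _)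
      (Finset.mem_univ k)).trans (hrow i)
  have hoff : ∀ k, k ≠ σ i → |A i k| ≤ (1 - t) * n.factorial / t := by
    intro k hk
    set f : Fin n → Fin n := Function.update σ i k with hf
    have hfn : f ∉ Finset.univ.image (fun σ : Equiv.Perm (Fin n) => (σ : Fin n → Fin n)) := by
      intro hmem
      obtain ⟨τ, -, hτ⟩ := Finset.mem_image.1 hmem
      have hinj : Function.Injective f := by rw [← hτ]; exact τ.injective
      have hne : σ.symm k ≠ i := fun h0 => hk (by rw [← h0]; simp)
      have h1 : f i = k := by simp [hf]
      have h2 : f (σ.symm k) = k := by rw [hf, Function.update_of_ne hne]; simp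
      exact hne (hinj (h2.trans h1.symm))
    have h1 : (∏ l, |A l (f l)|) + ∑ σ : Equiv.Perm (Fin n), ∏ i, |A i (σ i)| ≤ 1 := by
      refine le_trans ?_ hprod1
      rw [hall, hemb, ← Finset.sum_insert hfn (f := fun f => ∏ l, |A l (f l)|)]
      exact Finset.sum_le_sum_of_subset_of_nonneg (Finset.subset_univ _)
        fun f _ _ => Finset.prod_nonneg fun _ _ => abs_nonneg _
    have h2 : ∏ l, |A l (f l)| = |A i k| * ∏ l ∈ Finset.univ.erase i, |A l (σ l)| := by
      rw [← Finset.mul_prod_erase _ _ (Finset.mem_univ i)]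
      congr 1
      · simp [hf]
      · refine Finset.prod_congr rfl fun l hl => ?_
        rw [hf, Function.update_of_ne (Finset.mem_erase.1 hl).1]
    have h3 : t / n.factorial ≤ ∏ l ∈ Finset.univ.erase i, |A l (σ l)| := by
      refine hσ.trans ?_
      rw [← Finset.mul_prod_erase _ _ (Finset.mem_univ i)]
      exact mul_le_of_le_one_left (Finset.prod_nonneg fun _ _ => abs_nonneg _) (hle1 _ _)
    rw [h2] at h1
    have h4 : |A i k| * (t / n.factorial) ≤ 1 - t := by
      have := mul_le_mul_of_nonneg_left h3 (abs_nonneg (A i k))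
      linarith
    rw [le_div_iff₀ ht]
    rw [← mul_div_assoc, div_le_iff₀ hfac] at h4
    exact h4
  have hrowlow : t ≤ ∑ k, |A i k| := by
    refine htall.trans ?_
    rw [← Finset.mul_prod_erase _ _ (Finset.mem_univ i)]
    exact mul_le_of_le_one_right (Finset.sum_nonneg fun _ _ => abs_nonneg _)
      (Finset.prod_le_one (fun i _ => Finset.sum_nonneg fun _ _ => abs_nonneg _)
        fun i _ => hrow i)
  have hsum : |A i (σ i)| + ∑ k ∈ Finset.univ.erase (σ i), |A i k| = ∑ k, |A i k| :=
    Finset.add_sum_erase Finset.univ (fun k => |A i k|) (Finset.mem_univ (σ i))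
  have ht1 : t ≤ 1 := htall.trans hprod1
  have hη : 0 ≤ (1 - t) * n.factorial / t := by
    have : 0 ≤ 1 - t := by linarith
    positivity
  have hsmall : ∑ k ∈ Finset.univ.erase (σ i), |A i k| ≤ n * ((1 - t) * n.factorial / t) := by
    refine (Finset.sum_le_card_nsmul _ _ _ fun k hk => hoff k (Finset.mem_erase.1 hk).1).trans ?_
    rw [nsmul_eq_mul]
    refine mul_le_mul_of_nonneg_right ?_ hη
    exact_mod_cast (Finset.card_le_univ _).trans (by simp)
  linarith

lemma l1_lower {n : ℕ} (A : Matrix (Fin n) (Fin n) ℝ) (σ : Equiv.Perm (Fin n)) (θ : ℝ)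
    (h : ∀ i, θ ≤ |A i (σ i)| - ∑ k ∈ Finset.univ.erase (σ i), |A i k|) (y : Fin n → ℝ) :
    θ * ∑ i, |y i| ≤ ∑ k, |(A.transpose.mulVec y) k| := by
  classical
  have h1 : ∀ k, |y (σ.symm k)| * |A (σ.symm k) k|
      - ∑ i, (if k = σ i then 0 else |y i| * |A i k|) ≤ |(A.transpose.mulVec y) k| := by
    intro k
    have e : (A.transpose.mulVec y) k = A (σ.symm k) k * y (σ.symm k)
        + ∑ i ∈ Finset.univ.erase (σ.symm k), A i k * y i :=
      (Finset.add_sum_erase Finset.univ (fun i => A i k * y i) (Finset.mem_univ (σ.symm k))).symm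
    have e2 : ∑ i, (if k = σ i then 0 else |y i| * |A i k|)
        = ∑ i ∈ Finset.univ.erase (σ.symm k), |y i| * |A i k| := by
      rw [← Finset.add_sum_erase Finset.univ _ (Finset.mem_univ (σ.symm k))]
      simp only [Equiv.apply_symm_apply, if_true, zero_add]
      refine Finset.sum_congr rfl fun i hi => ?_
      rw [if_neg]
      intro h0
      exact (Finset.mem_erase.1 hi).1 (by rw [h0]; simp)
    rw [e, e2]
    have h2 : |∑ i ∈ Finset.univ.erase (σ.symm k), A i k * y i|
        ≤ ∑ i ∈ Finset.univ.erase (σ.symm k), |y i| * |A i k| := by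
      refine (Finset.abs_sum_le_sum_abs _ _).trans (le_of_eq ?_)
      exact Finset.sum_congr rfl fun i _ => by rw [abs_mul, mul_comm]
    have h3 : |A (σ.symm k) k * y (σ.symm k)| = |y (σ.symm k)| * |A (σ.symm k) k| := by
      rw [abs_mul, mul_comm]
    have h4 := abs_add_le (A (σ.symm k) k * y (σ.symm k)
        + ∑ i ∈ Finset.univ.erase (σ.symm k), A i k * y i)
        (-∑ i ∈ Finset.univ.erase (σ.symm k), A i k * y i)
    rw [add_neg_cancel_right, abs_neg, h3] at h4
    linarith
  refine le_trans ?_ (Finset.sum_le_sum fun k _ => h1 k)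
  rw [Finset.sum_sub_distrib, Finset.sum_comm, Finset.mul_sum]
  have e3 : ∑ k, |y (σ.symm k)| * |A (σ.symm k) k| = ∑ i, |y i| * |A i (σ i)| := by
    rw [← Equiv.sum_comp σ]
    simp
  rw [e3, ← Finset.sum_sub_distrib]
  refine Finset.sum_le_sum fun i _ => ?_
  have e4 : ∑ k, (if k = σ i then 0 else |y i| * |A i k|)
      = |y i| * ∑ k ∈ Finset.univ.erase (σ i), |A i k| := by
    rw [← Finset.add_sum_erase Finset.univ _ (Finset.mem_univ (σ i)), Finset.mul_sum]
    simp only [if_true, zero_add]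
    exact Finset.sum_congr rfl fun k hk => if_neg (Finset.mem_erase.1 hk).1
  rw [e4, ← mul_sub, mul_comm]
  exact mul_le_mul_of_nonneg_left (h i) (abs_nonneg _)

lemma pol_image {n : ℕ} (A : Matrix (Fin n) (Fin n) ℝ) (K : Set (Fin n → ℝ)) :
    pol (A.mulVec '' K) = Matrix.toLin' A.transpose ⁻¹' (pol K) := by
  ext y
  have e : ∀ x : Fin n → ℝ, (A.mulVec x) ⬝ᵥ y = x ⬝ᵥ (A.transpose.mulVec y) := by
    intro x
    rw [Matrix.mulVec_transpose, dotProduct_comm, Matrix.dotProduct_mulVec, dotProduct_comm]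
  constructor
  · intro hy x hx
    have := hy _ ⟨x, hx, rfl⟩
    rw [e] at this
    exact this
  · rintro hy _ ⟨x, hx, rfl⟩
    rw [e]
    exact hy x hx

lemma lin_inv {n : ℕ} (A : Matrix (Fin n) (Fin n) ℝ) (hA : A.det ≠ 0) (K : Set (Fin n → ℝ)) :
    volume (A.mulVec '' K) * volume (pol (A.mulVec '' K)) = volume K * volume (pol K) := by
  rw [pol_image]
  have e : A.mulVec '' K = Matrix.toLin' A '' K := rfl
  have hT : LinearMap.det (Matrix.toLin' A.transpose) ≠ 0 := by
    rwa [LinearMap.det_toLin', Matrix.det_transpose]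
  rw [e, Measure.addHaar_image_linearMap, Measure.addHaar_preimage_linearMap _ hT,
    LinearMap.det_toLin', LinearMap.det_toLin', Matrix.det_transpose]
  have h1 : ENNReal.ofReal |A.det| * ENNReal.ofReal |A.det⁻¹| = 1 := by
    rw [← ENNReal.ofReal_mul (abs_nonneg _), ← abs_mul, mul_inv_cancel₀ hA]; simp
  calc _ = (ENNReal.ofReal |A.det| * ENNReal.ofReal |A.det⁻¹|) * (volume K * volume (pol K)) := by
        ring
    _ = _ := by rw [h1, one_mul]

lemma theta_small (n : ℕ) (δ0 : ℝ) (hδ0 : 0 < δ0) : ∃ δ : ℝ, 0 < δ ∧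
    1 / (1 + δ0) ≤ ((1 + δ) ^ n)⁻¹
      - 2 * n * ((1 - ((1 + δ) ^ n)⁻¹) * n.factorial / ((1 + δ) ^ n)⁻¹) := by
  have hc : ContinuousAt (fun δ : ℝ => ((1 + δ) ^ n)⁻¹
      - 2 * n * ((1 - ((1 + δ) ^ n)⁻¹) * n.factorial / ((1 + δ) ^ n)⁻¹)) 0 := by
    fun_prop (disch := simp)
  have h1 : 1 / (1 + δ0) < (fun δ : ℝ => ((1 + δ) ^ n)⁻¹
      - 2 * n * ((1 - ((1 + δ) ^ n)⁻¹) * n.factorial / ((1 + δ) ^ n)⁻¹)) 0 := by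
    simp only [add_zero, one_pow, inv_one, sub_self, zero_mul, _root_.zero_div, mul_zero, sub_zero]
    rw [div_lt_one (by linarith)]; linarith
  have h2 := hc.eventually (lt_mem_nhds h1)
  obtain ⟨ε, hε, hball⟩ := Metric.eventually_nhds_iff.1 h2
  refine ⟨ε / 2, by linarith, (hball ?_).le⟩
  rw [Real.dist_eq, sub_zero, abs_of_pos (by linarith)]; linarith

lemma sign_dot {n : ℕ} {K : Set (Fin n → ℝ)} (hcube : ∀ x : Fin n → ℝ, (∀ i, |x i| ≤ 1) → x ∈ K)
    (y : Fin n → ℝ) (hy : y ∈ pol K) : ∑ i, |y i| ≤ 1 := by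
  have := hy (fun i => if 0 ≤ y i then 1 else -1) (hcube _ fun i => by split_ifs <;> simp)
  refine le_trans (le_of_eq ?_) this
  refine Finset.sum_congr rfl fun i _ => ?_
  change |y i| = (if 0 ≤ y i then 1 else -1) * y i
  split_ifs with h
  · rw [abs_of_nonneg h]; ring
  · rw [abs_of_neg (not_le.1 h)]; ring

lemma auerbach {n : ℕ} {K : Set (Fin n → ℝ)} (hconv : Convex ℝ K)
    (hcl : IsClosed K) (hsym : ∀ x ∈ K, -x ∈ K) {δ : ℝ} (hδ : 0 < δ)
    (hcube : ∀ x : Fin n → ℝ, (∀ i, |x i| ≤ 1) → x ∈ K)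
    (hbig : ∀ x ∈ K, ∀ i, |x i| ≤ 1 + δ) :
    ∃ A : Matrix (Fin n) (Fin n) ℝ, ((1 + δ) ^ n)⁻¹ ≤ |A.det| ∧ (∀ i, A i ∈ pol K) ∧
      (∀ j, Pi.single j (1 : ℝ) ∈ A.mulVec '' K) := by
  classical
  have hcomp : IsCompact (pol K) := by
    refine Metric.isCompact_of_isClosed_isBounded (pol_closed K) ?_
    refine (Metric.isBounded_closedBall (x := (0 : Fin n → ℝ)) (r := 1)).subset fun y hy => ?_
    rw [mem_closedBall_zero_iff, pi_norm_le_iff_of_nonneg zero_le_one]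
    exact fun i => (Finset.single_le_sum (f := fun k => |y k|) (fun _ _ => abs_nonneg _)
      (Finset.mem_univ i)).trans (sign_dot hcube y hy)
  have hcomp2 : IsCompact (Set.pi Set.univ (fun _ : Fin n => pol K)) :=
    isCompact_univ_pi fun _ => hcomp
  have h1δ : 0 < 1 + δ := by linarith
  have hmem : (fun i => (1 + δ)⁻¹ • Pi.single i (1:ℝ) : Fin n → Fin n → ℝ)
      ∈ Set.pi Set.univ (fun _ : Fin n => pol K) := by
    intro i _ x hx
    rw [dotProduct_smul, dotProduct_single, mul_one, smul_eq_mul, inv_mul_le_one₀ h1δ]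
    exact (le_abs_self _).trans (hbig x hx i)
  obtain ⟨A, hA, hmax⟩ := hcomp2.exists_isMaxOn ⟨_, hmem⟩
    (f := fun A : Fin n → Fin n → ℝ => |(Matrix.of A).det|)
    (Continuous.continuousOn (by
      apply Continuous.abs
      exact Continuous.matrix_det (by fun_prop)))
  have hdet : ((1 + δ) ^ n)⁻¹ ≤ |(Matrix.of A).det| := by
    refine le_trans (le_of_eq ?_) (hmax hmem)
    have : (Matrix.of (fun i => (1 + δ)⁻¹ • Pi.single i (1:ℝ) : Fin n → Fin n → ℝ))
        = (1 + δ)⁻¹ • (1 : Matrix (Fin n) (Fin n) ℝ) := by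
      ext i j
      simp [Matrix.one_apply, Pi.single_apply, eq_comm]
    change ((1 + δ) ^ n)⁻¹ = |(Matrix.of (fun i => (1 + δ)⁻¹ • Pi.single i (1:ℝ) :
      Fin n → Fin n → ℝ)).det|
    rw [this, Matrix.det_smul, Matrix.det_one, mul_one, Fintype.card_fin, abs_of_pos (by positivity),
      inv_pow]
  have hd0 : (Matrix.of A).det ≠ 0 := by
    intro h0
    rw [h0, abs_zero] at hdet
    have : 0 < ((1 + δ) ^ n)⁻¹ := by positivity
    linarith
  refine ⟨Matrix.of A, hdet, fun i => hA i (Set.mem_univ i), fun j => ?_⟩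
  set B := Matrix.of A with hB
  have hz : B.mulVec (B⁻¹.mulVec (Pi.single j 1)) = Pi.single j (1:ℝ) := by
    rw [Matrix.mulVec_mulVec, Matrix.mul_nonsing_inv _ (isUnit_iff_ne_zero.2 hd0),
      Matrix.one_mulVec]
  refine ⟨B⁻¹.mulVec (Pi.single j 1), ?_, hz⟩
  set z := B⁻¹.mulVec (Pi.single j (1:ℝ)) with hzd
  apply bipolar hconv hcl (hcube 0 (by simp))
  intro y hy
  have h1 : (B.updateRow j y).det = B.det * (z ⬝ᵥ y) := by
    rw [← Matrix.cramer_transpose_apply]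
    have h2 := Matrix.mulVec_cramer B.transpose y
    rw [Matrix.det_transpose] at h2
    have h3 : z ⬝ᵥ (B.transpose.mulVec (B.transpose.cramer y)) = B.det * (z ⬝ᵥ y) := by
      rw [h2, dotProduct_smul, smul_eq_mul]
    rw [← h3, Matrix.mulVec_transpose, ← dotProduct_comm, ← Matrix.dotProduct_mulVec, hz,
      dotProduct_single, mul_one]
  have h4 : |(B.updateRow j y).det| ≤ |B.det| := by
    have hm : (Function.update A j y) ∈ Set.pi Set.univ (fun _ : Fin n => pol K) := by
      intro i _
      by_cases hij : i = j
      · subst hij; simpa using hy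
      · rw [Function.update_of_ne hij]; exact hA i (Set.mem_univ i)
    exact hmax hm
  rw [h1, abs_mul] at h4
  have h5 : 0 < |B.det| := abs_pos.2 hd0
  exact (le_abs_self _).trans (by nlinarith)

lemma reduced (n : ℕ) (hn : 2 ≤ n) : ∃ δ : ℝ, 0 < δ ∧ ∀ K : Set (Fin n → ℝ), Convex ℝ K →
    IsClosed K → (∀ x ∈ K, -x ∈ K) →
    (∀ x : Fin n → ℝ, (∀ i, |x i| ≤ 1) → x ∈ K) → (∀ x ∈ K, ∀ i, |x i| ≤ 1 + δ) →
    (4 : ℝ≥0∞) ^ n / (n.factorial : ℝ≥0∞) ≤ volume K * volume (pol K) := by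
  obtain ⟨δ0, hδ0, hcore⟩ := core_ineq n hn
  obtain ⟨δ, hδ, hθ⟩ := theta_small n δ0 hδ0
  refine ⟨δ, hδ, ?_⟩
  intro K hconv hcl hsym hcube hbig
  obtain ⟨A, hdet, hrows, hej⟩ := auerbach hconv hcl hsym hδ hcube hbig
  have ht : 0 < ((1 + δ) ^ n)⁻¹ := by positivity
  have hd0 : A.det ≠ 0 := by
    intro h0
    rw [h0, abs_zero] at hdet
    linarith
  obtain ⟨σ, hσ⟩ := perm_close hn A _ ht (fun i => sign_dot hcube (A i) (hrows i)) hdet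
  have hbd0 : ∀ y ∈ pol (A.mulVec '' K), ∑ i, |y i| ≤ 1 + δ0 := by
    intro y hy
    rw [pol_image] at hy
    have h1 := sign_dot hcube _ hy
    have h2 := (l1_lower A σ _ hσ y).trans h1
    have h3 : 0 ≤ ∑ i, |y i| := Finset.sum_nonneg fun _ _ => abs_nonneg _
    have h4 := (mul_le_mul_of_nonneg_right hθ h3).trans h2
    rwa [one_div, inv_mul_le_iff₀ (by linarith), mul_one] at h4
  have hclosed : IsClosed (A.mulVec '' K) := by
    have hcompK : IsCompact K := by
      refine Metric.isCompact_of_isClosed_isBounded hcl ?_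
      refine (Metric.isBounded_closedBall (x := (0 : Fin n → ℝ)) (r := 1 + δ)).subset fun y hy => ?_
      rw [mem_closedBall_zero_iff, pi_norm_le_iff_of_nonneg (by linarith)]
      exact hbig y hy
    have hcont : Continuous (A.mulVec) := (Matrix.toLin' A).continuous_of_finiteDimensional
    exact (hcompK.image hcont).isClosed
  have hconv' : Convex ℝ (A.mulVec '' K) := hconv.linear_image (Matrix.toLin' A)
  have hsym' : ∀ x ∈ A.mulVec '' K, -x ∈ A.mulVec '' K := by
    rintro _ ⟨x, hx, rfl⟩
    exact ⟨-x, hsym x hx, Matrix.mulVec_neg _ _⟩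
  have hsub : ∀ x ∈ A.mulVec '' K, ∀ i, |x i| ≤ 1 := by
    rintro _ ⟨x, hx, rfl⟩ i
    have h1 := hrows i x hx
    have h2 := hrows i (-x) (hsym x hx)
    rw [neg_dotProduct] at h2
    change |A i ⬝ᵥ x| ≤ 1
    rw [dotProduct_comm, abs_le]
    constructor <;> linarith
  have hN0 : NormK (A.mulVec '' K) δ0 := ⟨hconv', hclosed, hsym', hsub, hej, hbd0, hδ0.le⟩
  obtain ⟨ξ, hξ, hmax⟩ := hN0.pol_compact.exists_isMaxOn
    ⟨0, fun x _ => by rw [dotProduct_zero]; exact zero_le_one⟩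
    (f := fun y : Fin n → ℝ => ∑ i, |y i|) (by fun_prop)
  have i0 : Fin n := ⟨0, by omega⟩
  have h1 : 1 ≤ ∑ i, |ξ i| := by
    have hm : (Pi.single i0 1 : Fin n → ℝ) ∈ pol (A.mulVec '' K) := by
      apply hN0.bone_sub
      change ∑ i, |(Pi.single i0 1 : Fin n → ℝ) i| ≤ 1
      rw [Finset.sum_eq_single i0] <;> simp +contextual
    refine le_trans ?_ (hmax hm)
    have := Finset.single_le_sum (f := fun i => |(Pi.single i0 1 : Fin n → ℝ) i|)
      (fun _ _ => abs_nonneg _) (Finset.mem_univ i0)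
    simpa using this
  rw [← lin_inv A hd0 K]
  refine hcore _ (∑ i, |ξ i| - 1) (by have := hbd0 ξ hξ; linarith)
    ⟨hconv', hclosed, hsym', hsub, hej, fun y hy => ?_, by linarith⟩ ⟨ξ, hξ, by ring⟩
  have := hmax hy
  simp only [Set.mem_ofPred_eq] at this
  linarith

lemma vol_toLp {n : ℕ} (K : Set (EuclideanSpace ℝ (Fin n))) :
    volume ((WithLp.toLp 2 : (Fin n → ℝ) → EuclideanSpace ℝ (Fin n)) ⁻¹' K) = volume K := by
  exact (EuclideanSpace.volume_preserving_symm_measurableEquiv_toLp (Fin n)).symm.measure_preimage_equiv K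

lemma pol_toLp {n : ℕ} (K : Set (EuclideanSpace ℝ (Fin n))) :
    pol ((WithLp.toLp 2 : (Fin n → ℝ) → EuclideanSpace ℝ (Fin n)) ⁻¹' K)
      = (WithLp.toLp 2 : (Fin n → ℝ) → EuclideanSpace ℝ (Fin n)) ⁻¹' (polarBody K) := by
  have e : ∀ x : EuclideanSpace ℝ (Fin n), ∀ y : Fin n → ℝ,
      ⟪x, (WithLp.toLp 2 y : EuclideanSpace ℝ (Fin n))⟫ = (WithLp.ofLp x) ⬝ᵥ y := by
    intro x y
    rw [PiLp.inner_apply]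
    exact Finset.sum_congr rfl fun i _ => by simp [mul_comm]
  ext y
  constructor
  · intro hy x hx
    rw [e]
    exact hy _ hx
  · intro hy x hx
    have := hy _ hx
    rw [e] at this
    exact this

/-- the unit cube is a local minimizer of the Mahler volume product:
if the Banach–Mazur distance from an origin-symmetric convex body `K` to the cube is
at most `1 + δ(n)`, then `volₙ(K)·volₙ(K*) ≥ 𝒫(B∞ⁿ) = 4ⁿ/n!`. -/
theorem cube_local_min (n : ℕ) (hn : 2 ≤ n) :
    ∃ δ : ℝ, 0 < δ ∧
      ∀ K : Set (EuclideanSpace ℝ (Fin n)),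
        Convex ℝ K → IsCompact K → (interior K).Nonempty → K = -K →
        (∃ T : EuclideanSpace ℝ (Fin n) ≃ₗ[ℝ] EuclideanSpace ℝ (Fin n),
          cube n ⊆ T '' K ∧ T '' K ⊆ (1 + δ) • cube n) →
        volume K * volume (polarBody K) ≥ (4 : ℝ≥0∞) ^ n / (n.factorial : ℝ≥0∞) := by
  obtain ⟨δ, hδ, hred⟩ := reduced n hn
  refine ⟨δ, hδ, ?_⟩
  rintro K hconv hcomp - hsym ⟨T, hT1, hT2⟩
  set e : EuclideanSpace ℝ (Fin n) ≃ₗ[ℝ] (Fin n → ℝ) := WithLp.linearEquiv 2 ℝ (Fin n → ℝ) with he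
  set S : (Fin n → ℝ) ≃ₗ[ℝ] (Fin n → ℝ) := (e.symm.trans T).trans e with hS
  set K' : Set (Fin n → ℝ) := (WithLp.toLp 2 : (Fin n → ℝ) → EuclideanSpace ℝ (Fin n)) ⁻¹' K
    with hK'
  set A : Matrix (Fin n) (Fin n) ℝ := LinearMap.toMatrix' (S : (Fin n → ℝ) →ₗ[ℝ] (Fin n → ℝ))
    with hA
  have hAS : ∀ x, A.mulVec x = S x := fun x => LinearMap.toMatrix'_mulVec _ x
  have hSx : ∀ x, S x = WithLp.ofLp (T (WithLp.toLp 2 x)) := fun x => rfl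
  have hdet : A.det ≠ 0 := by
    rw [hA, LinearMap.det_toMatrix']
    exact (LinearEquiv.isUnit_det' S).ne_zero
  have himg : A.mulVec '' K' = S '' K' := Set.image_congr fun x _ => hAS x
  have hsymK : ∀ x ∈ K, -x ∈ K := by
    intro x hx
    rw [hsym]; simpa using hx
  have hcl' : IsClosed (S '' K') := by
    have h1 : K' = e '' K := by
      ext x
      constructor
      · intro hx; exact ⟨_, hx, rfl⟩
      · rintro ⟨y, hy, rfl⟩; exact hy
    rw [h1]
    have c1 : Continuous e := LinearMap.continuous_of_finiteDimensional
      (e : EuclideanSpace ℝ (Fin n) →ₗ[ℝ] (Fin n → ℝ))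
    have c2 : Continuous S := LinearMap.continuous_of_finiteDimensional
      (S : (Fin n → ℝ) →ₗ[ℝ] (Fin n → ℝ))
    exact ((hcomp.image c1).image c2).isClosed
  have hconv' : Convex ℝ (S '' K') := by
    have : Convex ℝ K' := hconv.linear_preimage (e.symm : (Fin n → ℝ) →ₗ[ℝ] _)
    exact this.linear_image (S : (Fin n → ℝ) →ₗ[ℝ] (Fin n → ℝ))
  have hmain := hred (S '' K') hconv' hcl' ?_ ?_ ?_
  · rw [← himg, lin_inv A hdet K', hK', pol_toLp, vol_toLp, vol_toLp] at hmain
    exact hmain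
  · rintro _ ⟨x, hx, rfl⟩
    exact ⟨-x, hsymK _ hx, map_neg S x⟩
  · intro x hx
    obtain ⟨y, hy, hyx⟩ := hT1 (show (WithLp.toLp 2 x : EuclideanSpace ℝ (Fin n)) ∈ cube n from hx)
    refine ⟨WithLp.ofLp y, hy, ?_⟩
    rw [hSx]
    change WithLp.ofLp (T y) = x
    rw [hyx]
  · rintro _ ⟨x, hx, rfl⟩ i
    obtain ⟨y, hy, hyx⟩ := hT2 ⟨_, hx, rfl⟩
    rw [hSx, ← hyx]
    change |(1 + δ) * y i| ≤ 1 + δ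
    rw [abs_mul, abs_of_pos (by linarith)]
    have := hy i
    nlinarith
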